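/- Let C_reg, C_gr ≥ 0 and let ω = Σ_{k≥1} ω_k, where each ω_k : ℝ² → (−∞,0] is smooth and compactly supported, ω_k = 0 for all sufficiently large k, supp ω_k ⊂ {2^{k−1} ≤ |x| ≤ 2^{k+1}}, ‖ω_k‖_{S¹₃} ≤ C_reg, and Σ_{k≥1} q_k ≤ C_gr where q_k := −inf_{θ∈S¹} T(|x|^{−2}ω_k)(0,θ). Then there exist a smooth compactly supported function ω̃ : ℝ² → ℝ with ω̃(x) ≤ ω(x) for all x ∈ ℝ², and a constant σ₀ ≥ 0 depending only on C_reg, C_gr, such that for every σ ≥ σ₀ the continuous function ũ(x+iy) := Eω̃(x+iy) + σ|y| (x, y ∈ ℝ²) is plurisubharmonic on ℂ², i.e. ũ(z) ≤ (1/2π)∫_{S¹} ũ(z + e^{iθ}v) dθ for all z, v ∈ ℂ². -/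

import Mathlib

open MeasureTheory Real

noncomputable section

/-- Directional derivative of a function on `ℝ²` in the direction `v`. -/
def pd (v : ℝ × ℝ) (ψ : ℝ × ℝ → ℝ) : ℝ × ℝ → ℝ := fun p => fderiv ℝ ψ p v

/-- The X-ray transform `Tψ(s,θ)`. -/
def xray (ψ : ℝ × ℝ → ℝ) (s θ : ℝ) : ℝ :=
  ∫ t : ℝ, ψ (t * Real.cos θ - s * Real.sin θ, t * Real.sin θ + s * Real.cos θ)

/-- The function `x ↦ |x|⁻² ψ(x)` on `ℝ²`. -/
def invSq (ψ : ℝ × ℝ → ℝ) : ℝ × ℝ → ℝ := fun p => (p.1 ^ 2 + p.2 ^ 2)⁻¹ * ψ p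

/-- `q(ψ) := −inf_{θ ∈ S¹} T(|x|⁻²ψ)(0,θ)`. -/
def qOf (ψ : ℝ × ℝ → ℝ) : ℝ := -(⨅ θ : ℝ, xray (invSq ψ) 0 θ)

/-- The Kohn–Nirenberg norm `‖ψ‖_{S¹₃}` is at most `C`. -/
def KNle (ψ : ℝ × ℝ → ℝ) (C : ℝ) : Prop :=
  ∀ γ₁ γ₂ : ℕ, γ₁ + γ₂ ≤ 3 → ∀ p : ℝ × ℝ,
    |Real.sqrt (1 + p.1 ^ 2 + p.2 ^ 2) ^ ((γ₁ + γ₂ : ℤ) - 1) *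
      (pd (1, 0))^[γ₁] ((pd (0, 1))^[γ₂] ψ) p| ≤ C

/-- The dyadic annulus `{2^{k−1} ≤ |x| ≤ 2^{k+1}}` in `ℝ²`. -/
def annulus (k : ℕ) : Set (ℝ × ℝ) :=
  {p | (2 : ℝ) ^ ((k : ℤ) - 1) ≤ Real.sqrt (p.1 ^ 2 + p.2 ^ 2) ∧
       Real.sqrt (p.1 ^ 2 + p.2 ^ 2) ≤ 2 ^ (k + 1)}

/-- Plurisubharmonicity via the sub-mean value property on complex lines. -/
def Psh (u : ℂ × ℂ → ℝ) : Prop :=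
  ∀ z v : ℂ × ℂ,
    u z ≤ (1 / (2 * π)) * ∫ θ in (0:ℝ)..(2 * π), u (z + Complex.exp (θ * Complex.I) • v)

/-- The function `u(x+iy) = Eω(x+iy) + σ|y|`, where `E` is the extension operator
`Eω(x+iy) = (1/π) ∫_ℝ ω(x+ty)/(1+t²) dt`. -/
def uExt (ω : ℝ × ℝ → ℝ) (σ : ℝ) : ℂ × ℂ → ℝ := fun z =>
  (1 / π) * (∫ t : ℝ, ω (z.1.re + t * z.1.im, z.2.re + t * z.2.im) / (1 + t ^ 2))
    + σ * Real.sqrt (z.1.im ^ 2 + z.2.im ^ 2)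

/-!
Off the real points, the Laplacian of `Eω + σ|y|` along a complex line through `x + iy` is a
nonnegative multiple of `T(∂ₙ²ω)(s, θ) + πσ`, where `(s, θ)` are the parameters of the real line
`{x + ty}` and `n` is its unit normal. It is therefore enough to bound from below the X-ray
transforms of the second normal derivatives of `ω̃`. A complex line in general position contains at
most one real point, where a logarithmic barrier replaces the computation of the Laplacian.

If `Tφ(0, θ)` does not depend on `θ`, then `T(∂ₙ²(|x|²φ))(0, θ) = Tφ(0, θ)`, because the second
angular derivative of `Tφ(0, ·)` vanishes. Hence `ω̃_k` is obtained from `ω_k` by subtracting a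
nonnegative function on the same annulus such that `T(|x|⁻²ω̃_k)(0, θ)` is a constant `-c q_k`. By
the symbol estimates, `T(∂ₙ²ω̃_k)(s, θ) ≥ -c q_k - D|s|/2ᵏ`, and the left side vanishes for
`|s| > 2ᵏ⁺¹`. The terms `|s|/2ᵏ` with `|s| ≤ 2ᵏ⁺¹` form a geometric series, so the sum over `k` is
bounded below.
-/

section

open Filter Topology InnerProductSpace Laplacian
open scoped ContDiff

/-! ### Subharmonic functions with one exceptional point -/

section Laplacian

lemma iteratedDeriv_two_nonpos_of_isLocalMax {g : ℝ → ℝ} {a : ℝ} (hg : ContinuousAt g a)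
    (hmax : IsLocalMax g a) : iteratedDeriv 2 g a ≤ 0 := by
  by_contra! hpos
  rw [iteratedDeriv_succ, iteratedDeriv_one] at hpos
  have hmin := isLocalMin_of_deriv_deriv_pos hpos hmax.deriv_eq_zero hg
  have hconst : g =ᶠ[𝓝 a] fun _ => g a := by
    filter_upwards [hmin, hmax] with p h₁ h₂ using le_antisymm h₂ h₁
  have hderiv : deriv g =ᶠ[𝓝 a] fun _ => 0 := by
    filter_upwards [hconst.eventuallyEq_nhds] with p hp
    rw [hp.deriv_eq, deriv_const]
  rw [hderiv.deriv_eq, deriv_const] at hpos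
  exact hpos.false

lemma iteratedDeriv_two_eq {g g' : ℝ → ℝ} {a A : ℝ} (hg : ∀ᶠ p in 𝓝 a, HasDerivAt g (g' p) p)
    (hg' : HasDerivAt g' A a) : iteratedDeriv 2 g a = A := by
  have hderiv : deriv g =ᶠ[𝓝 a] g' := hg.mono fun p hp => hp.deriv
  rw [iteratedDeriv_succ, iteratedDeriv_one, hderiv.deriv_eq, hg'.deriv]

lemma iteratedFDeriv_two_eq_iteratedDeriv_line {E : Type*} [NormedAddCommGroup E] [NormedSpace ℝ E]
    {f : E → ℝ} {x : E} (hf : ContDiffAt ℝ 2 f x) (v : E) :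
    iteratedFDeriv ℝ 2 f x ![v, v] = iteratedDeriv 2 (fun t : ℝ => f (x + t • v)) 0 := by
  have hline (t : ℝ) : HasDerivAt (fun t : ℝ => x + t • v) v t := by
    simpa using ((hasDerivAt_id t).smul_const v).const_add x
  have hx : Tendsto (fun t : ℝ => x + t • v) (𝓝 0) (𝓝 x) := by
    simpa [ContinuousAt] using (hline 0).continuousAt
  have hfirst : ∀ᶠ t in 𝓝 0,
      HasDerivAt (fun t : ℝ => f (x + t • v)) (fderiv ℝ f (x + t • v) v) t := by
    filter_upwards [hx.eventually (hf.eventually (by simp))] with t ht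
    exact (ht.differentiableAt two_ne_zero).hasFDerivAt.comp_hasDerivAt t (hline t)
  have hsecond : HasFDerivAt (fderiv ℝ f) (fderiv ℝ (fderiv ℝ f) x) (x + (0 : ℝ) • v) := by
    simpa using ((hf.fderiv_right (m := 1) le_rfl).differentiableAt one_ne_zero).hasFDerivAt
  have hsecond' : HasDerivAt (fun t : ℝ => fderiv ℝ f (x + t • v) v)
      (fderiv ℝ (fderiv ℝ f) x v v) 0 :=
    (ContinuousLinearMap.apply ℝ ℝ v).hasFDerivAt.comp_hasDerivAt 0
      (hsecond.comp_hasDerivAt 0 (hline 0))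
  simp [iteratedFDeriv_two_apply, iteratedDeriv_two_eq hfirst hsecond']

variable {E : Type*} [NormedAddCommGroup E] [InnerProductSpace ℝ E] [FiniteDimensional ℝ E]
  {f : E → ℝ} {x : E} {U : Set E} {c : ℝ}

lemma laplacian_nonpos_of_isLocalMax (hf : ContDiffAt ℝ 2 f x) (hmax : IsLocalMax f x) :
    Δ f x ≤ 0 := by
  simp only [laplacian_eq_iteratedFDeriv_stdOrthonormalBasis]
  refine Finset.sum_nonpos fun i _ => ?_
  have hline : Continuous fun t : ℝ => x + t • stdOrthonormalBasis ℝ E i := by fun_prop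
  have hx : x + (0 : ℝ) • stdOrthonormalBasis ℝ E i = x := by simp
  rw [iteratedFDeriv_two_eq_iteratedDeriv_line hf]
  refine iteratedDeriv_two_nonpos_of_isLocalMax
    (hf.continuousAt.comp_of_eq hline.continuousAt hx) ?_
  exact IsLocalMax.comp_continuous (by rwa [hx]) hline.continuousAt

lemma laplacian_norm_sq (x : E) :
    Δ (fun y : E => ‖y‖ ^ 2) x = 2 * Module.finrank ℝ E := by
  have hderiv (v : E) : fderiv ℝ (fderiv ℝ fun y : E => ‖y‖ ^ 2) x v v = 2 * ‖v‖ ^ 2 := by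
    have hfd : HasFDerivAt (fderiv ℝ fun y : E => ‖y‖ ^ 2) ((2 : ℕ) • innerSL ℝ (E := E)) x := by
      rw [fderiv_norm_sq]
      exact (innerSL ℝ (E := E)).hasFDerivAt.const_smul (2 : ℕ)
    rw [hfd.fderiv]
    change (2 : ℕ) • inner ℝ v v = 2 * ‖v‖ ^ 2
    rw [real_inner_self_eq_norm_sq, two_nsmul, two_mul]
  simp [laplacian_eq_iteratedFDeriv_stdOrthonormalBasis, iteratedFDeriv_two_apply, hderiv, mul_comm]

lemma le_of_laplacian_pos (hU : IsOpen U) (hU' : Bornology.IsBounded U)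
    (hcont : ContinuousOn f (closure U)) (hf : ∀ y ∈ U, ContDiffAt ℝ 2 f y)
    (hpos : ∀ y ∈ U, 0 < Δ f y) (hfr : ∀ y ∈ frontier U, f y ≤ c) (hx : x ∈ closure U) :
    f x ≤ c := by
  obtain ⟨y, hy, hmax⟩ := hU'.isCompact_closure.exists_isMaxOn ⟨x, hx⟩ hcont
  refine (hmax hx).trans (hfr y ⟨hy, fun hyU => ?_⟩)
  rw [hU.interior_eq] at hyU
  have hloc : IsLocalMax f y := (hmax.on_subset subset_closure).isLocalMax (hU.mem_nhds hyU)
  exact (hpos y hyU).not_ge (laplacian_nonpos_of_isLocalMax (hf y hyU) hloc)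

lemma le_of_laplacian_nonneg [Nontrivial E] (hU : IsOpen U) (hU' : Bornology.IsBounded U)
    (hcont : ContinuousOn f (closure U)) (hf : ∀ y ∈ U, ContDiffAt ℝ 2 f y)
    (hnonneg : ∀ y ∈ U, 0 ≤ Δ f y) (hfr : ∀ y ∈ frontier U, f y ≤ c) (hx : x ∈ closure U) :
    f x ≤ c := by
  obtain ⟨R, hR⟩ := isBounded_iff_forall_norm_le.1 hU'.closure
  have hsq (y : E) : ContDiffAt ℝ 2 (fun y : E => ‖y‖ ^ 2) y := (contDiff_norm_sq ℝ).contDiffAt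
  have hsmul (ε : ℝ) (y : E) : ContDiffAt ℝ 2 (ε • fun y : E => ‖y‖ ^ 2) y := (hsq y).const_smul ε
  have hperturbed {ε : ℝ} (hε : 0 < ε) : f x + ε * ‖x‖ ^ 2 ≤ c + ε * R ^ 2 := by
    refine le_of_laplacian_pos (f := f + ε • fun y : E => ‖y‖ ^ 2) hU hU'
      (hcont.add (by fun_prop)) (fun y hy => (hf y hy).add (hsmul ε y))
      (fun y hy => ?_) (fun y hy => ?_) hx
    · rw [(hf y hy).laplacian_add (hsmul ε y), laplacian_smul ε (hsq y),
        laplacian_norm_sq]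
      have := Module.finrank_pos (R := ℝ) (M := E)
      have := hnonneg y hy
      positivity
    · have := hR y (frontier_subset_closure hy)
      simp only [Pi.add_apply, Pi.smul_apply, smul_eq_mul]
      gcongr
      exact hfr y hy
  refine le_of_forall_pos_le_add fun ε hε => ?_
  have h := hperturbed (div_pos hε (by positivity : 0 < R ^ 2 + 1))
  have : ε / (R ^ 2 + 1) * R ^ 2 ≤ ε := by
    rw [div_mul_eq_mul_div, div_le_iff₀ (by positivity)]
    nlinarith
  have : 0 ≤ ε / (R ^ 2 + 1) * ‖x‖ ^ 2 := by positivity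
  linarith

end Laplacian

section Complex

variable {f : ℂ → ℝ} {U : Set ℂ} {ζ₀ ζ : ℂ} {c : ℝ}

lemma exists_add_mul_log_lt {η r : ℝ} (hη : 0 < η) (hr : 0 < r) (M a b : ℝ) :
    ∃ δ : ℝ, M + η * (log δ - a) < b ∧ 0 < δ ∧ δ < r := by
  have hlog : Tendsto (fun δ : ℝ => M + η * (log δ - a)) (𝓝[>] 0) atBot :=
    tendsto_atBot_add_const_left _ _ (Tendsto.const_mul_atBot hη
      (tendsto_atBot_add_const_right _ _ Real.tendsto_log_nhdsGT_zero))
  have hlt : ∀ᶠ δ : ℝ in 𝓝[>] 0, δ < r := (eventually_lt_nhds hr).filter_mono nhdsWithin_le_nhds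
  exact ((hlog.eventually_lt_atBot b).and (eventually_mem_nhdsWithin.and hlt)).exists

lemma harmonicAt_mul_log_norm_sub (η a : ℝ) (h : ζ ≠ ζ₀) :
    HarmonicAt (fun w => η * (log ‖w - ζ₀‖ - a)) ζ :=
  (((by fun_prop : AnalyticAt ℂ (· - ζ₀) ζ).harmonicAt_log_norm (sub_ne_zero.2 h)).sub
    (harmonicAt_const a)).const_smul (c := η)

lemma add_mul_log_le_of_laplacian_nonneg {L η : ℝ} (hU : IsOpen U) (hU' : Bornology.IsBounded U)
    (hcont : ContinuousOn f (closure U)) (hf : ∀ w ∈ U, w ≠ ζ₀ → ContDiffAt ℝ 2 f w)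
    (hnonneg : ∀ w ∈ U, w ≠ ζ₀ → 0 ≤ Δ f w) (hfr : ∀ w ∈ frontier U, f w ≤ c)
    (hL : ∀ w ∈ closure U, ‖w - ζ₀‖ ≤ L) (hη : 0 < η) (hζ : ζ ∈ U) (hne : ζ ≠ ζ₀) :
    f ζ + η * (log ‖ζ - ζ₀‖ - log L) ≤ c := by
  obtain ⟨M, hM⟩ := hU'.isCompact_closure.bddAbove_image hcont
  obtain ⟨δ, hδM, hδ, hδζ⟩ :=
    exists_add_mul_log_lt hη (norm_pos_iff.2 (sub_ne_zero.2 hne)) M (log L) c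
  set V : Set ℂ := U \ Metric.closedBall ζ₀ δ
  have hmemV {w : ℂ} (hw : w ∈ U) (hwδ : δ < ‖w - ζ₀‖) : w ∈ V := ⟨hw, by simpa [dist_eq_norm]⟩
  have hclosure {w : ℂ} (hw : w ∈ closure V) : w ∈ closure U ∧ δ ≤ ‖w - ζ₀‖ := by
    refine ⟨closure_mono Set.sdiff_subset hw, ?_⟩
    have hclosed : IsClosed {w : ℂ | δ ≤ ‖w - ζ₀‖} := isClosed_le (by fun_prop) (by fun_prop)
    refine closure_minimal (fun w hw => ?_) hclosed hw
    exact (not_le.1 (mt mem_closedBall_iff_norm.2 hw.2)).le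
  have hoff {w : ℂ} (hw : δ ≤ ‖w - ζ₀‖) : w ≠ ζ₀ := sub_ne_zero.1 (norm_pos_iff.1 (hδ.trans_le hw))
  set g : ℂ → ℝ := fun w => η * (log ‖w - ζ₀‖ - log L) with hg
  have hharm {w : ℂ} (hw : w ≠ ζ₀) : HarmonicAt g w := harmonicAt_mul_log_norm_sub η (log L) hw
  refine le_of_laplacian_nonneg (f := f + g) (hU.sdiff Metric.isClosed_closedBall)
    (hU'.subset Set.sdiff_subset) ?_ (fun w hw => ?_) (fun w hw => ?_) (fun w hw => ?_)
    (subset_closure (hmemV hζ hδζ))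
  · refine (hcont.mono fun w hw => (hclosure hw).1).add fun w hw => ?_
    exact (hharm (hoff (hclosure hw).2)).1.continuousAt.continuousWithinAt
  · have hwne := hoff (hclosure (subset_closure hw)).2
    exact (hf w hw.1 hwne).add (hharm hwne).1
  · have hwne := hoff (hclosure (subset_closure hw)).2
    rw [(hf w hw.1 hwne).laplacian_add (hharm hwne).1, (hharm hwne).2.self_of_nhds]
    simpa using hnonneg w hw.1 hwne
  · obtain ⟨hwU, hwδ⟩ := hclosure (frontier_subset_closure hw)
    have hwV : w ∉ V := (hU.sdiff Metric.isClosed_closedBall).frontier_eq ▸ hw |>.2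
    have hw₀ : 0 < ‖w - ζ₀‖ := hδ.trans_le hwδ
    by_cases hw' : w ∈ U
    · have hwδ' : ‖w - ζ₀‖ = δ := le_antisymm (not_lt.1 fun h => hwV (hmemV hw' h)) hwδ
      have : f w ≤ M := hM ⟨w, hwU, rfl⟩
      simp only [Pi.add_apply, hg, hwδ']
      linarith
    · have : log ‖w - ζ₀‖ ≤ log L := log_le_log hw₀ (hL w hwU)
      have : f w ≤ c := hfr w (hU.frontier_eq ▸ ⟨hwU, hw'⟩)
      simp only [Pi.add_apply, hg]
      nlinarith

lemma le_of_laplacian_nonneg_off_point (hU : IsOpen U) (hU' : Bornology.IsBounded U)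
    (hcont : ContinuousOn f (closure U)) (hf : ∀ w ∈ U, w ≠ ζ₀ → ContDiffAt ℝ 2 f w)
    (hnonneg : ∀ w ∈ U, w ≠ ζ₀ → 0 ≤ Δ f w) (hfr : ∀ w ∈ frontier U, f w ≤ c) (hζ : ζ ∈ U) :
    f ζ ≤ c := by
  obtain ⟨L, hL⟩ := isBounded_iff_forall_norm_le.1
    (hU'.closure.sub (Bornology.isBounded_singleton (x := ζ₀)))
  have hoff {w : ℂ} (hw : w ∈ U) (hne : w ≠ ζ₀) : f w ≤ c := by
    have hlim : Tendsto (fun η : ℝ => f w + η * (log ‖w - ζ₀‖ - log L)) (𝓝[>] 0) (𝓝 (f w)) := by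
      have : Continuous fun η : ℝ => f w + η * (log ‖w - ζ₀‖ - log L) := by fun_prop
      simpa using (this.tendsto 0).mono_left nhdsWithin_le_nhds
    refine le_of_tendsto hlim (eventually_mem_nhdsWithin.mono fun η hη => ?_)
    exact add_mul_log_le_of_laplacian_nonneg hU hU' hcont hf hnonneg hfr
      (fun z hz => hL _ (Set.sub_mem_sub hz rfl)) hη hw hne
  rcases eq_or_ne ζ ζ₀ with rfl | hne
  · have hlim : Tendsto f (𝓝[≠] ζ) (𝓝 (f ζ)) :=
      (hcont.continuousAt (mem_of_superset (hU.mem_nhds hζ) subset_closure)).mono_left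
        nhdsWithin_le_nhds
    refine le_of_tendsto hlim ?_
    filter_upwards [mem_nhdsWithin_of_mem_nhds (hU.mem_nhds hζ), eventually_mem_nhdsWithin]
      with w hw hne using hoff hw hne
  · exact hoff hζ hne

end Complex

section CircleAverage

open Complex

lemma exists_entire_of_mem_span_fourier {g : C(AddCircle (2 * π), ℂ)}
    (hg : g ∈ Submodule.span ℂ (Set.range (@fourier (2 * π)))) :
    ∃ P Q : ℂ → ℂ, Differentiable ℂ P ∧ Differentiable ℂ Q ∧
      ∀ θ : ℝ, g θ = P (exp (θ * I)) + (starRingEnd ℂ) (Q (exp (θ * I))) := by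
  induction hg using Submodule.span_induction with
  | mem g hg =>
    obtain ⟨n, rfl⟩ := hg
    have hval (θ : ℝ) : fourier n (θ : AddCircle (2 * π)) = exp (n * (θ * I)) := by
      have : (π : ℂ) ≠ 0 := by exact_mod_cast Real.pi_ne_zero
      rw [fourier_coe_apply]
      congr 1
      push_cast
      field_simp
    obtain ⟨m, rfl | rfl⟩ := n.eq_nat_or_neg
    · refine ⟨fun z => z ^ m, fun _ => 0, by fun_prop, by fun_prop, fun θ => ?_⟩
      simp [hval, ← Complex.exp_nat_mul]
    · refine ⟨fun _ => 0, fun z => z ^ m, by fun_prop, by fun_prop, fun θ => ?_⟩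
      simp [hval, ← Complex.exp_nat_mul, ← Complex.exp_conj]
  | zero => exact ⟨fun _ => 0, fun _ => 0, by fun_prop, by fun_prop, fun θ => by simp⟩
  | add g h _ _ hg hh =>
    obtain ⟨P, Q, hP, hQ, hgPQ⟩ := hg
    obtain ⟨P', Q', hP', hQ', hhPQ⟩ := hh
    refine ⟨fun z => P z + P' z, fun z => Q z + Q' z, by fun_prop, by fun_prop, fun θ => ?_⟩
    simp only [ContinuousMap.add_apply, hgPQ, hhPQ, map_add]
    ring
  | smul a g _ hg =>
    obtain ⟨P, Q, hP, hQ, hgPQ⟩ := hg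
    refine ⟨fun z => a * P z, fun z => (starRingEnd ℂ) a * Q z, by fun_prop, by fun_prop,
      fun θ => ?_⟩
    simp only [ContinuousMap.smul_apply, hgPQ, map_mul, smul_eq_mul, starRingEnd_self_apply]
    ring

lemma exists_addCircle_eq {f : ℂ → ℝ} (hf : Continuous f) :
    ∃ F : C(AddCircle (2 * π), ℂ), ∀ θ : ℝ, F θ = f (exp (θ * I)) := by
  have hper : Function.Periodic (fun θ : ℝ => (f (exp (θ * I)) : ℂ)) (2 * π) := fun θ => by
    have : ((θ + 2 * π : ℝ) : ℂ) * I = θ * I + 2 * π * I := by push_cast; ring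
    simp only [this, Complex.exp_periodic _]
  have hcont : Continuous (fun θ : ℝ => (f (exp (θ * I)) : ℂ)) := by fun_prop
  exact ⟨⟨hper.lift, continuous_coinduced_dom.2 hcont⟩, hper.lift_coe⟩

lemma exists_entire_re_approx {f : ℂ → ℝ} (hf : Continuous f) (c : ℂ) {R ε : ℝ} (hR : R ≠ 0)
    (hε : 0 < ε) :
    ∃ P : ℂ → ℂ, Differentiable ℂ P ∧ ∀ z ∈ Metric.sphere c R, |f z - (P z).re| ≤ ε := by
  have : Fact (0 < 2 * π) := ⟨Real.two_pi_pos⟩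
  obtain ⟨F, hF⟩ := exists_addCircle_eq (f := fun w => f (c + R * w)) (by fun_prop)
  have hmem : F ∈ (Submodule.span ℂ (Set.range (@fourier (2 * π)))).topologicalClosure := by
    rw [span_fourier_closure_eq_top]
    trivial
  obtain ⟨g, hg, hdist⟩ := Metric.mem_closure_iff.1 hmem ε hε
  obtain ⟨P, Q, hP, hQ, hgPQ⟩ := exists_entire_of_mem_span_fourier hg
  have hR' : (R : ℂ) ≠ 0 := mod_cast hR
  refine ⟨fun z => P ((z - c) / R) + Q ((z - c) / R), by fun_prop, fun z hz => ?_⟩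
  obtain ⟨θ, rfl⟩ : ∃ θ : ℝ, c + R * exp (θ * I) = z :=
    ⟨arg (z - c), by simp [← mem_sphere_iff_norm.1 hz, norm_mul_exp_arg_mul_I]⟩
  have hnorm : ‖F θ - g θ‖ ≤ ε := by
    rw [← dist_eq_norm]
    exact (ContinuousMap.dist_apply_le_dist _).trans hdist.le
  have hre := (Complex.abs_re_le_norm (F θ - g θ)).trans hnorm
  rw [hF, hgPQ] at hre
  simpa [hR'] using hre

lemma le_circleAverage_of_laplacian_nonneg_off_point {f : ℂ → ℝ} (hcont : Continuous f) {ζ₀ c : ℂ}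
    {R : ℝ} (hR : 0 < R) (hf : ∀ w ≠ ζ₀, ContDiffAt ℝ 2 f w) (hnonneg : ∀ w ≠ ζ₀, 0 ≤ Δ f w) :
    f c ≤ circleAverage f c R := by
  refine le_of_forall_pos_le_add fun ε hε => ?_
  obtain ⟨P, hP, happrox⟩ := exists_entire_re_approx hcont c hR.ne' (half_pos hε)
  have hharm (w : ℂ) : HarmonicAt (fun z => (P z).re) w := (hP.analyticAt w).harmonicAt_re
  have hPre : Continuous fun z => (P z).re := Complex.continuous_re.comp hP.continuous
  have hcenter : f c - (P c).re ≤ ε / 2 := by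
    refine le_of_laplacian_nonneg_off_point (f := f - fun z => (P z).re) (ζ₀ := ζ₀)
      (U := Metric.ball c R) Metric.isOpen_ball Metric.isBounded_ball
      (hcont.sub hPre).continuousOn (fun w _ hw => (hf w hw).sub (hharm w).1)
      (fun w _ hw => ?_) (fun w hw => ?_) (by simpa)
    · rw [(hf w hw).laplacian_sub (hharm w).1, (hharm w).2.self_of_nhds]
      simpa using hnonneg w hw
    · rw [frontier_ball _ hR.ne'] at hw
      exact (abs_le.1 (happrox w hw)).2
  calc f c ≤ (P c).re + ε / 2 := by linarith
    _ = circleAverage (fun z => (P z).re) c R + ε / 2 := by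
      rw [InnerProductSpace.HarmonicOnNhd.circleAverage_eq fun w _ => hharm w]
    _ ≤ circleAverage (f + fun _ => ε / 2) c R + ε / 2 := by
      refine add_le_add (circleAverage_mono hPre.continuousOn.circleIntegrable'
        (hcont.add continuous_const).continuousOn.circleIntegrable' fun z hz => ?_) le_rfl
      have := (abs_le.1 (happrox z (by rwa [abs_of_pos hR] at hz))).1
      simp only [Pi.add_apply]
      linarith
    _ = circleAverage f c R + ε := by
      rw [circleAverage_add hcont.continuousOn.circleIntegrable'
        continuous_const.continuousOn.circleIntegrable', circleAverage_const]
      ring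

end CircleAverage

/-! ### Differentiation under the integral sign -/

section ParametricIntegral

universe u

variable {E F : Type u} [NormedAddCommGroup E] [NormedSpace ℝ E]
  [NormedAddCommGroup F] [NormedSpace ℝ F] {w : ℝ → ℝ} {Φ : E → ℝ → F} {a b : ℝ}

lemma contDiff_uncurry_fderiv_left {m n : WithTop ℕ∞} (hΦ : ContDiff ℝ n (Function.uncurry Φ))
    (hmn : m + 1 ≤ n) :
    ContDiff ℝ m (Function.uncurry fun x t => fderiv ℝ (fun y => Φ y t) x) := by
  have hΦ' : ContDiff ℝ n (Function.uncurry fun (z : E × ℝ) y => Φ y z.2) :=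
    hΦ.comp (contDiff_snd.prodMk (contDiff_snd.comp contDiff_fst))
  exact ContDiff.fderiv hΦ' contDiff_fst hmn

variable [FiniteDimensional ℝ E]

lemma hasFDerivAt_intervalIntegral_smul (hw : Continuous w)
    (hΦ : ContDiff ℝ 1 (Function.uncurry Φ)) (x : E) :
    HasFDerivAt (fun x => ∫ t in a..b, w t • Φ x t)
      (∫ t in a..b, w t • fderiv ℝ (fun y => Φ y t) x) x := by
  have hΦ' : Continuous fun z : E × ℝ => fderiv ℝ (fun y => Φ y z.2) z.1 :=
    (contDiff_uncurry_fderiv_left (m := 0) hΦ (by norm_num)).continuous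
  have hline (y : E) : Continuous (Φ y) := hΦ.continuous.comp (by fun_prop : Continuous (y, ·))
  obtain ⟨M, hM⟩ := ((isCompact_closedBall x 1).prod
    (isCompact_uIcc (a := a) (b := b))).bddAbove_image
    (f := fun z : E × ℝ => ‖w z.2 • fderiv ℝ (fun y => Φ y z.2) z.1‖) (by fun_prop)
  have := secondCountableTopologyEither_of_left ℝ (E →L[ℝ] F)
  refine intervalIntegral.hasFDerivAt_integral_of_dominated_of_fderiv_le
    (bound := fun _ => M) (Metric.closedBall_mem_nhds x one_pos)
    (Eventually.of_forall fun y => Continuous.aestronglyMeasurable (by fun_prop))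
    (Continuous.intervalIntegrable (by fun_prop) _ _)
    (Continuous.aestronglyMeasurable
      (hw.smul (hΦ'.comp (by fun_prop : Continuous fun t : ℝ => (x, t)))))
    (Eventually.of_forall fun t ht y hy => hM ⟨(y, t), ⟨hy, Set.uIoc_subset_uIcc ht⟩, rfl⟩)
    (by simp) (Eventually.of_forall fun t _ y _ => ?_)
  have hd : DifferentiableAt ℝ (fun y => Φ y t) y :=
    (hΦ.comp (contDiff_id.prodMk contDiff_const)).differentiable one_ne_zero y
  exact hd.hasFDerivAt.const_smul (w t)

lemma contDiff_intervalIntegral_smul (hw : Continuous w)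
    (hΦ : ContDiff ℝ ∞ (Function.uncurry Φ)) :
    ContDiff ℝ ∞ fun x => ∫ t in a..b, w t • Φ x t := by
  refine contDiff_infty.2 fun n => ?_
  have hd (x : E) := hasFDerivAt_intervalIntegral_smul (a := a) (b := b) hw (hΦ.of_le (by simp)) x
  induction n generalizing F with
  | zero =>
    exact contDiff_zero.2 (continuous_iff_continuousAt.2 fun x => (hd x).continuousAt)
  | succ n ih =>
    push_cast
    refine contDiff_succ_iff_hasFDerivAt.2 ⟨_, ?_, hd⟩
    have hΦ' := contDiff_uncurry_fderiv_left (m := ∞) hΦ le_rfl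
    exact ih hΦ' (hasFDerivAt_intervalIntegral_smul hw (hΦ'.of_le (by simp)))

lemma iteratedFDeriv_two_intervalIntegral_smul (hw : Continuous w)
    (hΦ : ContDiff ℝ 2 (Function.uncurry Φ)) (x u v : E) :
    iteratedFDeriv ℝ 2 (fun x => ∫ t in a..b, w t • Φ x t) x ![u, v] =
      ∫ t in a..b, w t • iteratedFDeriv ℝ 2 (fun y => Φ y t) x ![u, v] := by
  have hΦ' := contDiff_uncurry_fderiv_left (m := 1) hΦ (by norm_num)
  have hΦ'' := contDiff_uncurry_fderiv_left (m := 0) hΦ' (by norm_num)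
  have hfderiv : fderiv ℝ (fun x => ∫ t in a..b, w t • Φ x t) =
      fun x => ∫ t in a..b, w t • fderiv ℝ (fun y => Φ y t) x :=
    funext fun x => (hasFDerivAt_intervalIntegral_smul hw (hΦ.of_le (by norm_num)) x).fderiv
  have hcont : Continuous fun t => w t • fderiv ℝ (fderiv ℝ fun y => Φ y t) x :=
    hw.smul (hΦ''.continuous.comp (by fun_prop : Continuous fun t : ℝ => (x, t)))
  simp only [iteratedFDeriv_two_apply, hfderiv,
    (hasFDerivAt_intervalIntegral_smul hw hΦ' x).fderiv]
  rw [ContinuousLinearMap.intervalIntegral_apply (hcont.intervalIntegrable _ _),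
    ContinuousLinearMap.intervalIntegral_apply
      ((hcont.clm_apply continuous_const).intervalIntegrable _ _)]
  rfl

lemma laplacian_intervalIntegral_smul {E F : Type u} [NormedAddCommGroup E]
    [InnerProductSpace ℝ E] [FiniteDimensional ℝ E] [NormedAddCommGroup F] [NormedSpace ℝ F]
    {Φ : E → ℝ → F} (hw : Continuous w)
    (hΦ : ContDiff ℝ 2 (Function.uncurry Φ)) (x : E) :
    Δ (fun x => ∫ t in a..b, w t • Φ x t) x = ∫ t in a..b, w t • Δ (fun y => Φ y t) x := by
  have hΦ' := contDiff_uncurry_fderiv_left (m := 1) hΦ (by norm_num)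
  have hΦ'' := (contDiff_uncurry_fderiv_left (m := 0) hΦ' (by norm_num)).continuous.comp
    (by fun_prop : Continuous fun t : ℝ => (x, t))
  have hcont (u : E) : Continuous fun t => w t • iteratedFDeriv ℝ 2 (fun y => Φ y t) x ![u, u] := by
    simp only [iteratedFDeriv_two_apply]
    exact hw.smul ((hΦ''.clm_apply continuous_const).clm_apply continuous_const)
  simp only [laplacian_eq_iteratedFDeriv_stdOrthonormalBasis, Finset.smul_sum,
    iteratedFDeriv_two_intervalIntegral_smul hw hΦ]
  exact (intervalIntegral.integral_finsetSum
    fun i _ => (hcont _).intervalIntegrable _ _).symm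

end ParametricIntegral

/-! ### Directional derivatives and lines in the plane -/

section DirectionalDerivative

variable {ψ φ : ℝ × ℝ → ℝ}

lemma contDiff_pd (hψ : ContDiff ℝ ∞ ψ) (v : ℝ × ℝ) : ContDiff ℝ ∞ (pd v ψ) :=
  (hψ.fderiv_right (m := ∞) le_rfl).clm_apply contDiff_const

lemma hasCompactSupport_pd (hψ : HasCompactSupport ψ) (v : ℝ × ℝ) : HasCompactSupport (pd v ψ) :=
  hψ.fderiv_apply (𝕜 := ℝ) v

lemma tsupport_pd_subset (ψ : ℝ × ℝ → ℝ) (v : ℝ × ℝ) : tsupport (pd v ψ) ⊆ tsupport ψ :=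
  tsupport_fderiv_apply_subset ℝ v

lemma pd_pd_eq_iteratedFDeriv (hψ : ContDiff ℝ 2 ψ) (u v p : ℝ × ℝ) :
    pd u (pd v ψ) p = iteratedFDeriv ℝ 2 ψ p ![u, v] := by
  have hd : DifferentiableAt ℝ (fderiv ℝ ψ) p :=
    (hψ.fderiv_right (m := 1) (by norm_num)).differentiable one_ne_zero p
  unfold pd
  rw [fderiv_clm_apply hd (by fun_prop), iteratedFDeriv_two_apply]
  simp

lemma pd_comm (hψ : ContDiff ℝ 2 ψ) (u v : ℝ × ℝ) : pd u (pd v ψ) = pd v (pd u ψ) := by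
  funext p
  have hsymm : IsSymmSndFDerivAt ℝ ψ p := hψ.contDiffAt.isSymmSndFDerivAt (by simp)
  simpa [pd_pd_eq_iteratedFDeriv hψ, iteratedFDeriv_two_apply] using hsymm u v

lemma pd_pd_smul_add_smul (hψ : ContDiff ℝ 2 ψ) (α β : ℝ) (u v p : ℝ × ℝ) :
    pd (α • u + β • v) (pd (α • u + β • v) ψ) p =
      α ^ 2 * pd u (pd u ψ) p + 2 * α * β * pd u (pd v ψ) p + β ^ 2 * pd v (pd v ψ) p := by
  have hsymm := congrFun (pd_comm hψ u v) p
  simp only [pd_pd_eq_iteratedFDeriv hψ, iteratedFDeriv_two_apply, Matrix.cons_val_zero,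
    Matrix.cons_val_one, map_add, map_smul, add_apply, smul_apply, smul_eq_mul] at hsymm ⊢
  rw [hsymm]
  ring

lemma pd_pd_smul (hψ : ContDiff ℝ 2 ψ) (r : ℝ) (v p : ℝ × ℝ) :
    pd (r • v) (pd (r • v) ψ) p = r ^ 2 * pd v (pd v ψ) p := by
  simpa using pd_pd_smul_add_smul hψ r 0 v v p

lemma pd_add (v : ℝ × ℝ) (hψ : Differentiable ℝ ψ) (hφ : Differentiable ℝ φ) :
    pd v (fun p => ψ p + φ p) = fun p => pd v ψ p + pd v φ p := by
  funext p
  simp only [pd, fderiv_fun_add (hψ p) (hφ p), add_apply]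

lemma pd_mul (v : ℝ × ℝ) (hψ : Differentiable ℝ ψ) (hφ : Differentiable ℝ φ) :
    pd v (fun p => ψ p * φ p) = fun p => pd v ψ p * φ p + ψ p * pd v φ p := by
  funext p
  simp only [pd, fderiv_fun_mul (hψ p) (hφ p), add_apply, smul_apply, smul_eq_mul]
  ring

lemma pd_pd_mul (v : ℝ × ℝ) (hψ : ContDiff ℝ ∞ ψ) (hφ : ContDiff ℝ ∞ φ) :
    pd v (pd v fun p => ψ p * φ p) =
      fun p => pd v (pd v ψ) p * φ p + 2 * (pd v ψ p * pd v φ p) + ψ p * pd v (pd v φ) p := by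
  have hdiff {χ : ℝ × ℝ → ℝ} (h : ContDiff ℝ ∞ χ) : Differentiable ℝ χ :=
    h.differentiable (by simp)
  have hψ' := contDiff_pd hψ v
  have hφ' := contDiff_pd hφ v
  rw [pd_mul v (hdiff hψ) (hdiff hφ), pd_add v ((hdiff hψ').fun_mul (hdiff hφ))
      ((hdiff hψ).fun_mul (hdiff hφ')),
    pd_mul v (hdiff hψ') (hdiff hφ), pd_mul v (hdiff hψ) (hdiff hφ')]
  funext p
  ring

end DirectionalDerivative

section Line

variable {E : Type*} [NormedAddCommGroup E] [NormedSpace ℝ E] {ψ : E → ℝ}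

lemma exists_eventually_line_notMem_tsupport {α : Type*} [TopologicalSpace α]
    (hψ : HasCompactSupport ψ) {X Y : α → E} {a : α} (hX : ContinuousAt X a)
    (hY : ContinuousAt Y a) (hYa : Y a ≠ 0) :
    ∃ T : ℝ, 0 ≤ T ∧ ∀ᶠ x in 𝓝 a, ∀ t : ℝ, T < |t| → X x + t • Y x ∉ tsupport ψ := by
  obtain ⟨R, hR⟩ := hψ.isCompact.isBounded.exists_norm_le
  have hYpos : 0 < ‖Y a‖ := norm_pos_iff.2 hYa
  refine ⟨(|R| + (‖X a‖ + 1)) / (‖Y a‖ / 2), by positivity, ?_⟩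
  filter_upwards [hX.norm.eventually_lt_const (lt_add_one _),
    hY.norm.eventually_const_lt (half_lt_self hYpos)] with x hXx hYx t ht hmem
  rw [div_lt_iff₀ (by positivity)] at ht
  have hsub : ‖t • Y x‖ ≤ ‖X x + t • Y x‖ + ‖X x‖ := by
    simpa using norm_sub_le (X x + t • Y x) (X x)
  rw [norm_smul, Real.norm_eq_abs] at hsub
  have hmul : |t| * (‖Y a‖ / 2) ≤ |t| * ‖Y x‖ := by gcongr
  linarith [hR _ hmem, le_abs_self R]

lemma exists_line_notMem_tsupport (hψ : HasCompactSupport ψ) (X : E) {Y : E} (hY : Y ≠ 0) :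
    ∃ T : ℝ, 0 ≤ T ∧ ∀ t : ℝ, T < |t| → X + t • Y ∉ tsupport ψ := by
  obtain ⟨T, hT, h⟩ := exists_eventually_line_notMem_tsupport (α := Unit) (a := ()) hψ
    (continuousAt_const (y := X)) (continuousAt_const (y := Y)) hY
  exact ⟨T, hT, h.self_of_nhds⟩

lemma integrable_comp_line (hψ : Continuous ψ) (hc : HasCompactSupport ψ) (X : E) {Y : E}
    (hY : Y ≠ 0) : Integrable fun t : ℝ => ψ (X + t • Y) := by
  obtain ⟨T, -, hT⟩ := exists_line_notMem_tsupport hc X hY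
  refine Continuous.integrable_of_hasCompactSupport (by fun_prop)
    (HasCompactSupport.intro (isCompact_closedBall (0 : ℝ) T) fun t ht =>
      image_eq_zero_of_notMem_tsupport (hT t (by simpa using ht)))

lemma integral_fderiv_line_eq_zero (hψ : ContDiff ℝ 1 ψ) (hc : HasCompactSupport ψ) (X : E)
    {Y : E} (hY : Y ≠ 0) : ∫ t : ℝ, fderiv ℝ ψ (X + t • Y) Y = 0 := by
  have hfderiv : Continuous fun p => fderiv ℝ ψ p Y :=
    (hψ.continuous_fderiv one_ne_zero).clm_apply continuous_const
  refine integral_eq_zero_of_hasDerivAt_of_integrable (f := fun t : ℝ => ψ (X + t • Y))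
    (fun t => ?_) (integrable_comp_line hfderiv (hc.fderiv_apply (𝕜 := ℝ) Y) X hY)
    (integrable_comp_line hψ.continuous hc X hY)
  have hline : HasDerivAt (fun t : ℝ => X + t • Y) Y t := by
    simpa using ((hasDerivAt_id t).smul_const Y).const_add X
  exact (hψ.differentiable one_ne_zero _).hasFDerivAt.comp_hasDerivAt t hline

lemma integral_eq_intervalIntegral_of_forall_abs_lt {f : ℝ → ℝ} {T : ℝ} (hT : 0 ≤ T)
    (hf : ∀ t, T < |t| → f t = 0) : ∫ t, f t = ∫ t in (-T)..T, f t := by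
  rw [intervalIntegral.integral_of_le (by linarith), ← integral_Icc_eq_integral_Ioc,
    setIntegral_eq_integral_of_forall_compl_eq_zero fun t ht => hf t ?_]
  by_contra! h
  exact ht (abs_le.1 h)

end Line

section Plane

variable {ψ : ℝ × ℝ → ℝ}

/-- The quarter turn `y ↦ y^⊥` of the plane. -/
def perp (y : ℝ × ℝ) : ℝ × ℝ := (-y.2, y.1)

/-- The cross product of two vectors of the plane, i.e. their determinant. -/
def cross (a b : ℝ × ℝ) : ℝ := a.1 * b.2 - a.2 * b.1

/-- The Euclidean norm on `ℝ × ℝ`, whose Mathlib norm is the supremum norm. -/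
def euclidNorm (y : ℝ × ℝ) : ℝ := √(y.1 ^ 2 + y.2 ^ 2)

lemma normSq_pos_of_ne_zero {y : ℝ × ℝ} (hy : y ≠ 0) : 0 < y.1 ^ 2 + y.2 ^ 2 := by
  rw [Ne, Prod.ext_iff, not_and_or] at hy
  rcases hy with (h : y.1 ≠ 0) | (h : y.2 ≠ 0) <;> positivity

lemma euclidNorm_pos {y : ℝ × ℝ} (hy : y ≠ 0) : 0 < euclidNorm y :=
  Real.sqrt_pos.2 (normSq_pos_of_ne_zero hy)

lemma sq_euclidNorm (y : ℝ × ℝ) : euclidNorm y ^ 2 = y.1 ^ 2 + y.2 ^ 2 :=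
  Real.sq_sqrt (by positivity)

lemma contDiffAt_euclidNorm {y : ℝ × ℝ} (hy : y ≠ 0) : ContDiffAt ℝ ∞ euclidNorm y :=
  ContDiffAt.sqrt (by fun_prop) (normSq_pos_of_ne_zero hy).ne'

lemma iteratedFDeriv_two_euclidNorm {y : ℝ × ℝ} (hy : y ≠ 0) (b : ℝ × ℝ) :
    iteratedFDeriv ℝ 2 euclidNorm y ![b, b] = cross y b ^ 2 / euclidNorm y ^ 3 := by
  have hline (i : ℝ × ℝ →L[ℝ] ℝ) (t : ℝ) : HasDerivAt (fun t : ℝ => i (y + t • b)) (i b) t := by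
    simpa using ((hasDerivAt_id t).smul_const (i b)).const_add (i y)
  have hfst := hline (.fst ℝ ℝ ℝ)
  have hsnd := hline (.snd ℝ ℝ ℝ)
  simp only [ContinuousLinearMap.coe_fst', ContinuousLinearMap.coe_snd'] at hfst hsnd
  have hfirst (t : ℝ) (ht : y + t • b ≠ 0) : HasDerivAt (fun t : ℝ => euclidNorm (y + t • b))
      (((y + t • b).1 * b.1 + (y + t • b).2 * b.2) / euclidNorm (y + t • b)) t := by
    refine ((((hfst t).pow 2).add ((hsnd t).pow 2)).sqrt
      (normSq_pos_of_ne_zero ht).ne').congr_deriv ?_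
    have := euclidNorm_pos ht
    unfold euclidNorm at this ⊢
    simp only [Pi.add_apply, Pi.pow_apply]
    field_simp
    push_cast
    ring
  have hy0 : y + (0 : ℝ) • b ≠ 0 := by simpa using hy
  have hne : ∀ᶠ t : ℝ in 𝓝 0, y + t • b ≠ 0 := by
    have hcont : ContinuousAt (fun t : ℝ => y + t • b) 0 := by fun_prop
    exact hcont.eventually_ne hy0
  rw [iteratedFDeriv_two_eq_iteratedDeriv_line (contDiffAt_infty.1 (contDiffAt_euclidNorm hy) 2)]
  refine iteratedDeriv_two_eq (hne.mono hfirst) (((((hfst 0).mul_const b.1).add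
    ((hsnd 0).mul_const b.2)).div (hfirst 0 hy0) (euclidNorm_pos hy0).ne').congr_deriv ?_)
  have hpos := euclidNorm_pos hy
  simp only [zero_smul, add_zero, Pi.add_apply]
  field_simp
  rw [sq_euclidNorm, cross]
  ring

lemma integral_pd_pd_line (hψ : ContDiff ℝ ∞ ψ) (hc : HasCompactSupport ψ) (X a : ℝ × ℝ)
    {Y : ℝ × ℝ} (hY : Y ≠ 0) :
    ∫ t : ℝ, pd a (pd a ψ) (X + t • Y) =
      cross Y a ^ 2 / euclidNorm Y ^ 4 *
        ∫ t : ℝ, pd (perp Y) (pd (perp Y) ψ) (X + t • Y) := by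
  have hpos := normSq_pos_of_ne_zero hY
  set β := cross Y a / (Y.1 ^ 2 + Y.2 ^ 2) with hβ
  set α := (a.1 * Y.1 + a.2 * Y.2) / (Y.1 ^ 2 + Y.2 ^ 2) with hα
  have ha : a = α • Y + β • perp Y := by
    ext <;> simp only [hα, hβ, perp, cross, Prod.fst_add, Prod.snd_add, Prod.smul_fst,
      Prod.smul_snd, smul_eq_mul] <;> field_simp <;> ring
  have hint (u v : ℝ × ℝ) : Integrable fun t : ℝ => pd u (pd v ψ) (X + t • Y) :=
    integrable_comp_line (contDiff_pd (contDiff_pd hψ v) u).continuous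
      (hasCompactSupport_pd (hasCompactSupport_pd hc v) u) X hY
  have hzero (v : ℝ × ℝ) : ∫ t : ℝ, pd Y (pd v ψ) (X + t • Y) = 0 :=
    integral_fderiv_line_eq_zero ((contDiff_pd hψ v).of_le (by simp))
      (hasCompactSupport_pd hc v) X hY
  have hβ2 : β ^ 2 = cross Y a ^ 2 / euclidNorm Y ^ 4 := by
    rw [hβ, ← sq_euclidNorm]
    ring
  rw [← hβ2, ha]
  simp_rw [pd_pd_smul_add_smul (contDiff_infty.1 hψ 2)]
  have hint' : Integrable fun t : ℝ => α ^ 2 * pd Y (pd Y ψ) (X + t • Y) +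
      2 * α * β * pd Y (pd (perp Y) ψ) (X + t • Y) :=
    ((hint _ _).const_mul _).add ((hint _ _).const_mul _)
  rw [integral_add hint' ((hint _ _).const_mul _),
    integral_add ((hint _ _).const_mul _) ((hint _ _).const_mul _), integral_const_mul,
    integral_const_mul, integral_const_mul, hzero, hzero]
  ring

end Plane

/-! ### A criterion for plurisubharmonicity -/

section Criterion

/-- The real part of a point of `ℂ²`. -/
def reVec (z : ℂ × ℂ) : ℝ × ℝ := (z.1.re, z.2.re)

/-- The imaginary part of a point of `ℂ²`. -/
def imVec (z : ℂ × ℂ) : ℝ × ℝ := (z.1.im, z.2.im)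

/-- The unit vector with angle `θ`. -/
def dirVec (θ : ℝ) : ℝ × ℝ := (cos θ, sin θ)

/-- The unit normal `dirVec θ ^⊥` to the direction with angle `θ`, so that the line of `xray · s θ`
is `{s • normalVec θ + t • dirVec θ | t ∈ ℝ}`. -/
def normalVec (θ : ℝ) : ℝ × ℝ := (-sin θ, cos θ)

/-- The extension operator without its factor `1/π`, so that `uExt ω σ` is
`poissonExt ω / π + σ|imVec|`. -/
def poissonExt (ψ : ℝ × ℝ → ℝ) (z : ℂ × ℂ) : ℝ :=
  ∫ t : ℝ, ψ (reVec z + t • imVec z) / (1 + t ^ 2)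

variable {ψ : ℝ × ℝ → ℝ} {σ : ℝ}

lemma contDiff_reVec : ContDiff ℝ ∞ reVec :=
  (Complex.reCLM.contDiff.comp contDiff_fst).prodMk (Complex.reCLM.contDiff.comp contDiff_snd)

lemma contDiff_imVec : ContDiff ℝ ∞ imVec :=
  (Complex.imCLM.contDiff.comp contDiff_fst).prodMk (Complex.imCLM.contDiff.comp contDiff_snd)

lemma reVec_add_smul_one (z v : ℂ × ℂ) (ζ : ℂ) (p : ℝ) :
    reVec (z + (ζ + p • (1 : ℂ)) • v) = reVec (z + ζ • v) + p • reVec v := by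
  ext <;> simp [reVec] <;> ring

lemma reVec_add_smul_I (z v : ℂ × ℂ) (ζ : ℂ) (p : ℝ) :
    reVec (z + (ζ + p • Complex.I) • v) = reVec (z + ζ • v) + p • -imVec v := by
  ext <;> simp [reVec, imVec] <;> ring

lemma imVec_add_smul_one (z v : ℂ × ℂ) (ζ : ℂ) (p : ℝ) :
    imVec (z + (ζ + p • (1 : ℂ)) • v) = imVec (z + ζ • v) + p • imVec v := by
  ext <;> simp [imVec] <;> ring

lemma imVec_add_smul_I (z v : ℂ × ℂ) (ζ : ℂ) (p : ℝ) :
    imVec (z + (ζ + p • Complex.I) • v) = imVec (z + ζ • v) + p • reVec v := by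
  ext <;> simp [reVec, imVec] <;> ring

lemma laplacian_comp_of_affine {E : Type*} [NormedAddCommGroup E] [NormedSpace ℝ E] {G : E → ℝ}
    {Q : ℂ → E} {ζ : ℂ} {u v : E} (hG : ContDiffAt ℝ 2 G (Q ζ)) (hQ : ContDiffAt ℝ 2 Q ζ)
    (hu : ∀ p : ℝ, Q (ζ + p • (1 : ℂ)) = Q ζ + p • u)
    (hv : ∀ p : ℝ, Q (ζ + p • Complex.I) = Q ζ + p • v) :
    Δ (fun ζ : ℂ => G (Q ζ)) ζ =
      iteratedFDeriv ℝ 2 G (Q ζ) ![u, u] + iteratedFDeriv ℝ 2 G (Q ζ) ![v, v] := by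
  have hGQ : ContDiffAt ℝ 2 (fun ζ => G (Q ζ)) ζ := hG.comp ζ hQ
  simp only [laplacian_eq_iteratedFDeriv_complexPlane, iteratedFDeriv_two_eq_iteratedDeriv_line hGQ,
    iteratedFDeriv_two_eq_iteratedDeriv_line hG, hu, hv]

/-- The factor `1 + t²` produced here cancels the Poisson kernel of the extension operator. -/
lemma laplacian_comp_complexLine (hψ : ContDiff ℝ 2 ψ) (z v : ℂ × ℂ) (ζ : ℂ) (t : ℝ) :
    Δ (fun ζ : ℂ => ψ (reVec (z + ζ • v) + t • imVec (z + ζ • v))) ζ =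
      (1 + t ^ 2) * (pd (reVec v) (pd (reVec v) ψ) (reVec (z + ζ • v) + t • imVec (z + ζ • v)) +
        pd (imVec v) (pd (imVec v) ψ) (reVec (z + ζ • v) + t • imVec (z + ζ • v))) := by
  have hre := contDiff_infty.1 contDiff_reVec 2
  have him := contDiff_infty.1 contDiff_imVec 2
  have hQ : ContDiff ℝ 2 fun ζ : ℂ => reVec (z + ζ • v) + t • imVec (z + ζ • v) :=
    (hre.comp (by fun_prop)).add ((him.comp (by fun_prop)).const_smul t)
  rw [laplacian_comp_of_affine (u := (1 : ℝ) • reVec v + t • imVec v)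
    (v := t • reVec v + (-1 : ℝ) • imVec v) hψ.contDiffAt hQ.contDiffAt]
  · rw [← pd_pd_eq_iteratedFDeriv hψ, ← pd_pd_eq_iteratedFDeriv hψ, pd_pd_smul_add_smul hψ,
      pd_pd_smul_add_smul hψ]
    ring
  · intro p
    rw [reVec_add_smul_one, imVec_add_smul_one]
    module
  · intro p
    rw [reVec_add_smul_I, imVec_add_smul_I]
    module

lemma exists_poissonExt_eventuallyEq (hψ : HasCompactSupport ψ) (z v : ℂ × ℂ) {ζ : ℂ}
    (hζ : imVec (z + ζ • v) ≠ 0) :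
    ∃ T : ℝ, 0 ≤ T ∧ (∀ t, T < |t| → reVec (z + ζ • v) + t • imVec (z + ζ • v) ∉ tsupport ψ) ∧
      (fun ζ : ℂ => poissonExt ψ (z + ζ • v)) =ᶠ[𝓝 ζ]
        fun ζ => ∫ t in (-T)..T,
          (1 + t ^ 2)⁻¹ • ψ (reVec (z + ζ • v) + t • imVec (z + ζ • v)) := by
  have hre := contDiff_reVec.continuous
  have him := contDiff_imVec.continuous
  obtain ⟨T, hT, hsupp⟩ := exists_eventually_line_notMem_tsupport hψ
    (X := fun ζ : ℂ => reVec (z + ζ • v)) (Y := fun ζ : ℂ => imVec (z + ζ • v)) (a := ζ)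
    (by fun_prop) (by fun_prop) hζ
  refine ⟨T, hT, hsupp.self_of_nhds, hsupp.mono fun ζ' hζ' => ?_⟩
  simp only [poissonExt, div_eq_inv_mul, smul_eq_mul]
  exact integral_eq_intervalIntegral_of_forall_abs_lt hT fun t ht => by
    rw [image_eq_zero_of_notMem_tsupport (hζ' t ht), mul_zero]

lemma continuous_inv_one_add_sq : Continuous fun t : ℝ => (1 + t ^ 2)⁻¹ :=
  Continuous.inv₀ (by fun_prop) fun t => by positivity

lemma contDiff_uncurry_complexLine (hψ : ContDiff ℝ ∞ ψ) (z v : ℂ × ℂ) :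
    ContDiff ℝ ∞ (Function.uncurry fun (ζ : ℂ) (t : ℝ) =>
      ψ (reVec (z + ζ • v) + t • imVec (z + ζ • v))) := by
  have hre := contDiff_reVec
  have him := contDiff_imVec
  exact hψ.comp ((hre.comp (by fun_prop)).add (contDiff_snd.smul (him.comp (by fun_prop))))

lemma contDiffAt_poissonExt_complexLine (hψ : ContDiff ℝ ∞ ψ) (hc : HasCompactSupport ψ)
    (z v : ℂ × ℂ) {ζ : ℂ} (hζ : imVec (z + ζ • v) ≠ 0) :
    ContDiffAt ℝ ∞ (fun ζ : ℂ => poissonExt ψ (z + ζ • v)) ζ := by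
  obtain ⟨T, -, -, heq⟩ := exists_poissonExt_eventuallyEq hc z v hζ
  exact (contDiff_intervalIntegral_smul continuous_inv_one_add_sq
    (contDiff_uncurry_complexLine hψ z v)).contDiffAt.congr_of_eventuallyEq heq

lemma laplacian_poissonExt_complexLine (hψ : ContDiff ℝ ∞ ψ) (hc : HasCompactSupport ψ)
    (z v : ℂ × ℂ) {ζ : ℂ} (hζ : imVec (z + ζ • v) ≠ 0) :
    Δ (fun ζ : ℂ => poissonExt ψ (z + ζ • v)) ζ =
      (∫ t : ℝ, pd (reVec v) (pd (reVec v) ψ) (reVec (z + ζ • v) + t • imVec (z + ζ • v))) +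
        ∫ t : ℝ, pd (imVec v) (pd (imVec v) ψ) (reVec (z + ζ • v) + t • imVec (z + ζ • v)) := by
  have hpd (u : ℝ × ℝ) : Integrable fun t : ℝ =>
      pd u (pd u ψ) (reVec (z + ζ • v) + t • imVec (z + ζ • v)) :=
    integrable_comp_line (contDiff_pd (contDiff_pd hψ u) u).continuous
      (hasCompactSupport_pd (hasCompactSupport_pd hc u) u) _ hζ
  obtain ⟨T, hT, hsupp, heq⟩ := exists_poissonExt_eventuallyEq hc z v hζ
  have hpd0 (u : ℝ × ℝ) (t : ℝ) (ht : T < |t|) :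
      pd u (pd u ψ) (reVec (z + ζ • v) + t • imVec (z + ζ • v)) = 0 :=
    image_eq_zero_of_notMem_tsupport fun hmem =>
      hsupp t ht (tsupport_pd_subset _ _ (tsupport_pd_subset _ _ hmem))
  rw [← integral_add (hpd _) (hpd _), (laplacian_congr_nhds heq).self_of_nhds,
    integral_eq_intervalIntegral_of_forall_abs_lt hT fun t ht => by simp [hpd0 _ t ht]]
  rw [laplacian_intervalIntegral_smul continuous_inv_one_add_sq
    (contDiff_infty.1 (contDiff_uncurry_complexLine hψ z v) 2)]
  refine intervalIntegral.integral_congr fun t _ => ?_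
  have hpos : 1 + t ^ 2 ≠ 0 := by positivity
  simp only [laplacian_comp_complexLine (contDiff_infty.1 hψ 2), smul_eq_mul]
  field_simp

/-- `T(∂_n²ψ)(s,θ)`, the X-ray transform of the second derivative of `ψ` normal to the line. -/
def xrayHess (ψ : ℝ × ℝ → ℝ) (s θ : ℝ) : ℝ :=
  xray (pd (normalVec θ) (pd (normalVec θ) ψ)) s θ

lemma xray_eq (ψ : ℝ × ℝ → ℝ) (s θ : ℝ) :
    xray ψ s θ = ∫ t : ℝ, ψ (s • normalVec θ + t • dirVec θ) := by
  unfold xray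
  congr 1 with t
  congr 1
  ext <;> simp [normalVec, dirVec] <;> ring

lemma dirVec_ne_zero (θ : ℝ) : dirVec θ ≠ 0 := fun h => by
  have hcos : cos θ = 0 := congrArg Prod.fst h
  have hsin : sin θ = 0 := congrArg Prod.snd h
  simpa [hcos, hsin] using sin_sq_add_cos_sq θ

lemma exists_eq_euclidNorm_smul_dirVec (y : ℝ × ℝ) : ∃ θ, y = euclidNorm y • dirVec θ := by
  refine ⟨Complex.arg ⟨y.1, y.2⟩, ?_⟩
  have hnorm : euclidNorm y = ‖(⟨y.1, y.2⟩ : ℂ)‖ := by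
    rw [Complex.norm_def, Complex.normSq_mk, ← sq, ← sq, euclidNorm]
  ext
  · simp [dirVec, hnorm, Complex.norm_mul_cos_arg]
  · simp [dirVec, hnorm, Complex.norm_mul_sin_arg]

lemma integral_pd_perp_line_eq (hψ : ContDiff ℝ 2 ψ) (X : ℝ × ℝ) {r : ℝ} (hr : 0 < r) (θ : ℝ) :
    ∫ t : ℝ, pd (perp (r • dirVec θ)) (pd (perp (r • dirVec θ)) ψ) (X + t • r • dirVec θ) =
      r * xrayHess ψ (cross (dirVec θ) X) θ := by
  have hperp : perp (r • dirVec θ) = r • normalVec θ := by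
    ext <;> simp [perp, dirVec, normalVec]
  set a := X.1 * cos θ + X.2 * sin θ
  set s := cross (dirVec θ) X with hs
  have hX (t : ℝ) : X + t • r • dirVec θ = s • normalVec θ + (r * t + a) • dirVec θ := by
    have h := sin_sq_add_cos_sq θ
    ext <;> simp only [hs, a, cross, normalVec, dirVec, Prod.fst_add, Prod.snd_add, Prod.smul_fst,
      Prod.smul_snd, smul_eq_mul]
    · linear_combination (-X.1) * h
    · linear_combination (-X.2) * h
  simp_rw [hperp, pd_pd_smul hψ, hX]
  rw [xrayHess, xray_eq]
  set F := pd (normalVec θ) (pd (normalVec θ) ψ)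
  rw [integral_const_mul,
    Measure.integral_comp_mul_left (fun t => F (s • normalVec θ + (t + a) • dirVec θ)) r,
    integral_add_right_eq_self (fun t => F (s • normalVec θ + t • dirVec θ)), abs_inv,
    abs_of_pos hr, smul_eq_mul]
  field_simp

lemma neg_mul_euclidNorm_le_integral_pd_perp_line (hψ : ContDiff ℝ 2 ψ)
    (h : ∀ s θ, -(π * σ) ≤ xrayHess ψ s θ) (X : ℝ × ℝ) {Y : ℝ × ℝ} (hY : Y ≠ 0) :
    -(π * σ) * euclidNorm Y ≤ ∫ t : ℝ, pd (perp Y) (pd (perp Y) ψ) (X + t • Y) := by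
  obtain ⟨θ, hθ⟩ := exists_eq_euclidNorm_smul_dirVec Y
  have hr := euclidNorm_pos hY
  set r := euclidNorm Y
  rw [hθ, integral_pd_perp_line_eq hψ X hr, mul_comm]
  exact mul_le_mul_of_nonneg_left (h _ _) hr.le

lemma contDiffAt_euclidNorm_complexLine (z v : ℂ × ℂ) {ζ : ℂ} (hζ : imVec (z + ζ • v) ≠ 0) :
    ContDiffAt ℝ ∞ (fun ζ : ℂ => euclidNorm (imVec (z + ζ • v))) ζ :=
  ContDiffAt.comp (g := euclidNorm) (f := fun ζ : ℂ => imVec (z + ζ • v)) ζ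
    (contDiffAt_euclidNorm hζ) (contDiff_imVec.comp (by fun_prop)).contDiffAt

lemma laplacian_euclidNorm_complexLine (z v : ℂ × ℂ) {ζ : ℂ} (hζ : imVec (z + ζ • v) ≠ 0) :
    Δ (fun ζ : ℂ => euclidNorm (imVec (z + ζ • v))) ζ =
      (cross (imVec (z + ζ • v)) (imVec v) ^ 2 + cross (imVec (z + ζ • v)) (reVec v) ^ 2) /
        euclidNorm (imVec (z + ζ • v)) ^ 3 := by
  have him : ContDiff ℝ 2 fun ζ : ℂ => imVec (z + ζ • v) :=
    (contDiff_infty.1 contDiff_imVec 2).comp (by fun_prop)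
  rw [laplacian_comp_of_affine (contDiffAt_infty.1 (contDiffAt_euclidNorm hζ) 2) him.contDiffAt
      (imVec_add_smul_one z v ζ) (imVec_add_smul_I z v ζ),
    iteratedFDeriv_two_euclidNorm hζ, iteratedFDeriv_two_euclidNorm hζ, add_div]

lemma contDiffAt_uExt_complexLine (hψ : ContDiff ℝ ∞ ψ) (hc : HasCompactSupport ψ)
    (z v : ℂ × ℂ) {ζ : ℂ} (hζ : imVec (z + ζ • v) ≠ 0) :
    ContDiffAt ℝ ∞ (fun ζ : ℂ => uExt ψ σ (z + ζ • v)) ζ :=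
  (contDiffAt_const.mul (contDiffAt_poissonExt_complexLine hψ hc z v hζ)).add
    (contDiffAt_const.mul (contDiffAt_euclidNorm_complexLine z v hζ))

lemma laplacian_uExt_complexLine (hψ : ContDiff ℝ ∞ ψ) (hc : HasCompactSupport ψ)
    (z v : ℂ × ℂ) {ζ : ℂ} (hζ : imVec (z + ζ • v) ≠ 0) :
    let X := reVec (z + ζ • v)
    let Y := imVec (z + ζ • v)
    Δ (fun ζ : ℂ => uExt ψ σ (z + ζ • v)) ζ =
      (cross Y (reVec v) ^ 2 + cross Y (imVec v) ^ 2) / (π * euclidNorm Y ^ 4) *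
        ((∫ t : ℝ, pd (perp Y) (pd (perp Y) ψ) (X + t • Y)) + π * σ * euclidNorm Y) := by
  intro X Y
  have hE := contDiffAt_infty.1 (contDiffAt_poissonExt_complexLine hψ hc z v hζ) 2
  have hN := contDiffAt_infty.1 (contDiffAt_euclidNorm_complexLine z v hζ) 2
  have hsum : Δ (fun ζ : ℂ => uExt ψ σ (z + ζ • v)) ζ =
      Δ ((1 / π) • fun ζ : ℂ => poissonExt ψ (z + ζ • v)) ζ +
        Δ (σ • fun ζ : ℂ => euclidNorm (imVec (z + ζ • v))) ζ :=
    (hE.const_smul (1 / π)).laplacian_add (hN.const_smul σ)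
  have hpos := euclidNorm_pos hζ
  rw [hsum, laplacian_smul _ hE, laplacian_smul _ hN,
    laplacian_poissonExt_complexLine hψ hc z v hζ, laplacian_euclidNorm_complexLine z v hζ,
    integral_pd_pd_line hψ hc _ (reVec v) hζ, integral_pd_pd_line hψ hc _ (imVec v) hζ,
    smul_eq_mul, smul_eq_mul]
  simp only [X, Y]
  field_simp
  ring

lemma laplacian_uExt_complexLine_nonneg (hψ : ContDiff ℝ ∞ ψ) (hc : HasCompactSupport ψ)
    (h : ∀ s θ, -(π * σ) ≤ xrayHess ψ s θ) (z v : ℂ × ℂ) {ζ : ℂ}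
    (hζ : imVec (z + ζ • v) ≠ 0) : 0 ≤ Δ (fun ζ : ℂ => uExt ψ σ (z + ζ • v)) ζ := by
  have hlow := neg_mul_euclidNorm_le_integral_pd_perp_line (contDiff_infty.1 hψ 2) h
    (reVec (z + ζ • v)) hζ
  rw [laplacian_uExt_complexLine hψ hc z v hζ]
  exact mul_nonneg (by positivity) (by linarith)

lemma continuous_uExt (hψ : Continuous ψ) (hc : HasCompactSupport ψ) : Continuous (uExt ψ σ) := by
  obtain ⟨C, hC⟩ := hψ.bounded_above_of_compact_support hc
  unfold uExt
  refine (continuous_const.mul ?_).add (by fun_prop)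
  refine continuous_of_dominated (bound := fun t => C * (1 + t ^ 2)⁻¹) (fun z => ?_) (fun z => ?_)
    (integrable_inv_one_add_sq.const_mul C) (Eventually.of_forall fun t => by fun_prop)
  · exact (Continuous.div (by fun_prop) (by fun_prop) fun t => by positivity).aestronglyMeasurable
  · refine Eventually.of_forall fun t => ?_
    have hpos : (0 : ℝ) < 1 + t ^ 2 := by positivity
    rw [norm_div, Real.norm_of_nonneg hpos.le, div_eq_mul_inv]
    gcongr
    exact hC _

lemma exists_forall_ne_imVec_ne_zero (z : ℂ × ℂ) {v : ℂ × ℂ} (hv : cross (reVec v) (imVec v) ≠ 0) :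
    ∃ ζ₀ : ℂ, ∀ ζ ≠ ζ₀, imVec (z + ζ • v) ≠ 0 := by
  have huniq (ζ ζ' : ℂ) (h : imVec (z + ζ • v) = 0) (h' : imVec (z + ζ' • v) = 0) : ζ = ζ' := by
    simp only [imVec, Prod.ext_iff, Prod.fst_add, Prod.snd_add, Prod.smul_fst, Prod.smul_snd,
      Complex.add_im, smul_eq_mul, Complex.mul_im, Prod.fst_zero, Prod.snd_zero] at h h'
    simp only [cross, reVec, imVec] at hv
    refine Complex.ext (mul_right_cancel₀ hv ?_) (mul_right_cancel₀ hv ?_)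
    · linear_combination v.1.re * (h.2 - h'.2) - v.2.re * (h.1 - h'.1)
    · linear_combination v.2.im * (h.1 - h'.1) - v.1.im * (h.2 - h'.2)
  by_cases hex : ∃ ζ₀ : ℂ, imVec (z + ζ₀ • v) = 0
  · obtain ⟨ζ₀, hζ₀⟩ := hex
    exact ⟨ζ₀, fun ζ hne hζ => hne (huniq _ _ hζ hζ₀)⟩
  · exact ⟨0, fun ζ _ hζ => hex ⟨ζ, hζ⟩⟩

lemma uExt_le_circleAverage_of_cross_ne_zero (hψ : ContDiff ℝ ∞ ψ) (hc : HasCompactSupport ψ)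
    (h : ∀ s θ, -(π * σ) ≤ xrayHess ψ s θ) (z : ℂ × ℂ) {v : ℂ × ℂ}
    (hv : cross (reVec v) (imVec v) ≠ 0) :
    uExt ψ σ z ≤ circleAverage (fun ζ : ℂ => uExt ψ σ (z + ζ • v)) 0 1 := by
  obtain ⟨ζ₀, hζ₀⟩ := exists_forall_ne_imVec_ne_zero z hv
  have hcont := continuous_uExt (σ := σ) hψ.continuous hc
  simpa using le_circleAverage_of_laplacian_nonneg_off_point
    (f := fun ζ : ℂ => uExt ψ σ (z + ζ • v)) (c := 0) (by fun_prop) one_pos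
    (fun ζ hζ => contDiffAt_infty.1 (contDiffAt_uExt_complexLine hψ hc z v (hζ₀ ζ hζ)) 2)
    fun ζ hζ => laplacian_uExt_complexLine_nonneg hψ hc h z v (hζ₀ ζ hζ)

lemma eventually_cross_ne_zero (v : ℂ × ℂ) : ∀ᶠ ε : ℝ in 𝓝[≠] 0,
    cross (reVec (v + (ε : ℂ) • (1, Complex.I))) (imVec (v + (ε : ℂ) • (1, Complex.I))) ≠ 0 := by
  have hcross (ε : ℝ) :
      cross (reVec (v + (ε : ℂ) • (1, Complex.I))) (imVec (v + (ε : ℂ) • (1, Complex.I))) =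
        1 * ε ^ 2 + (v.1.re + v.2.im) * ε + cross (reVec v) (imVec v) := by
    simp only [cross, reVec, imVec, Prod.smul_mk, Prod.fst_add, Prod.snd_add, smul_eq_mul, mul_one,
      Complex.add_re, Complex.add_im, Complex.mul_re, Complex.mul_im, Complex.ofReal_re,
      Complex.ofReal_im, Complex.I_re, Complex.I_im]
    ring
  let P : Polynomial ℝ := .C 1 * .X ^ 2 + .C (v.1.re + v.2.im) * .X + .C (cross (reVec v) (imVec v))
  have hP : P ≠ 0 := fun h => by
    have hlead : P.leadingCoeff = 1 := Polynomial.leadingCoeff_quadratic one_ne_zero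
    simp [h] at hlead
  have hroots : ∀ᶠ ε : ℝ in 𝓝[≠] 0, ε ∈ Set.univ \ {ε | P.IsRoot ε} :=
    nhdsNE_of_nhdsNE_sdiff_finite univ_mem (Polynomial.finite_setOfPred_isRoot hP).to_subtype
  filter_upwards [hroots] with ε hε
  rw [hcross]
  simpa [P, Polynomial.IsRoot] using hε

theorem psh_uExt_of_xrayHess_ge (hψ : ContDiff ℝ ∞ ψ) (hc : HasCompactSupport ψ)
    (h : ∀ s θ, -(π * σ) ≤ xrayHess ψ s θ) : Psh (uExt ψ σ) := by
  intro z v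
  have hcont := continuous_uExt (σ := σ) hψ.continuous hc
  have hmean : Continuous fun ε : ℝ => circleAverage
      (fun ζ : ℂ => uExt ψ σ (z + ζ • (v + (ε : ℂ) • ((1, Complex.I) : ℂ × ℂ)))) 0 1 := by
    simp only [circleAverage_def, smul_eq_mul]
    refine continuous_const.mul ?_
    refine intervalIntegral.continuous_parametric_intervalIntegral_of_continuous' ?_ _ _
    simp only [Function.uncurry_def, circleMap]
    fun_prop
  have hlim := (hmean.tendsto 0).mono_left (nhdsWithin_le_nhds (s := {(0 : ℝ)}ᶜ))
  have hle := ge_of_tendsto hlim ((eventually_cross_ne_zero v).mono fun ε hε =>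
    uExt_le_circleAverage_of_cross_ne_zero hψ hc h z hε)
  simpa [circleAverage_def, circleMap] using hle

end Criterion

/-! ### Central second normal derivatives -/

section CentralTransform

variable {φ : ℝ × ℝ → ℝ}

section Ray

variable {y : ℝ × ℝ}

lemma exists_integral_ray_eventuallyEq (hc : HasCompactSupport φ) (hy : y ≠ 0) :
    ∃ T : ℝ, 0 ≤ T ∧ (∀ t : ℝ, T < |t| → t • y ∉ tsupport φ) ∧
      (fun y => ∫ t : ℝ, φ (t • y)) =ᶠ[𝓝 y] fun y => ∫ t in (-T)..T, (1 : ℝ) • φ (t • y) := by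
  obtain ⟨T, hT, hsupp⟩ := exists_eventually_line_notMem_tsupport hc
    (continuousAt_const (y := 0)) continuousAt_id hy
  simp only [zero_add, id] at hsupp
  refine ⟨T, hT, hsupp.self_of_nhds, hsupp.mono fun y' hy' => ?_⟩
  simp only [one_smul]
  exact integral_eq_intervalIntegral_of_forall_abs_lt hT fun t ht =>
    image_eq_zero_of_notMem_tsupport (hy' t ht)

lemma contDiff_uncurry_ray (hφ : ContDiff ℝ ∞ φ) :
    ContDiff ℝ ∞ (Function.uncurry fun (y : ℝ × ℝ) (t : ℝ) => φ (t • y)) :=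
  hφ.comp (contDiff_snd.smul contDiff_fst)

lemma contDiffAt_integral_ray (hφ : ContDiff ℝ ∞ φ) (hc : HasCompactSupport φ) (hy : y ≠ 0) :
    ContDiffAt ℝ ∞ (fun y => ∫ t : ℝ, φ (t • y)) y := by
  obtain ⟨T, -, -, heq⟩ := exists_integral_ray_eventuallyEq hc hy
  exact (contDiff_intervalIntegral_smul continuous_const
    (contDiff_uncurry_ray hφ)).contDiffAt.congr_of_eventuallyEq heq

lemma iteratedFDeriv_two_integral_ray (hφ : ContDiff ℝ ∞ φ) (hc : HasCompactSupport φ)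
    (hy : y ≠ 0) (n : ℝ × ℝ) :
    iteratedFDeriv ℝ 2 (fun y => ∫ t : ℝ, φ (t • y)) y ![n, n] =
      ∫ t : ℝ, t ^ 2 * iteratedFDeriv ℝ 2 φ (t • y) ![n, n] := by
  obtain ⟨T, hT, hsupp, heq⟩ := exists_integral_ray_eventuallyEq hc hy
  rw [(heq.iteratedFDeriv ℝ 2).self_of_nhds, iteratedFDeriv_two_intervalIntegral_smul
    continuous_const (contDiff_infty.1 (contDiff_uncurry_ray hφ) 2),
    integral_eq_intervalIntegral_of_forall_abs_lt hT]
  · simp [iteratedFDeriv_comp_const_smul _ (contDiff_infty.1 hφ 2)]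
  · intro t ht
    rw [image_eq_zero_of_notMem_tsupport
      fun hmem => hsupp t ht (tsupport_iteratedFDeriv_subset 2 hmem)]
    simp

end Ray

lemma iteratedDeriv_two_inv_sqrt_one_add_sq :
    iteratedDeriv 2 (fun p => (√(1 + p ^ 2))⁻¹) 0 = -1 := by
  have hpos (p : ℝ) : (0 : ℝ) < 1 + p ^ 2 := by positivity
  have hsqrt (p : ℝ) : HasDerivAt (fun p => √(1 + p ^ 2)) (p / √(1 + p ^ 2)) p := by
    have h : HasDerivAt (fun p : ℝ => 1 + p ^ 2) (2 * p) p := by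
      simpa using (hasDerivAt_pow 2 p).const_add 1
    refine (h.sqrt (hpos p).ne').congr_deriv ?_
    field_simp
  have hinv (p : ℝ) := (hsqrt p).inv (Real.sqrt_pos.2 (hpos p)).ne'
  refine iteratedDeriv_two_eq (.of_forall hinv) ?_
  have hnum := ((hasDerivAt_id (0 : ℝ)).div (hsqrt 0) (by simp)).neg
  exact (hnum.div ((hsqrt 0).pow 2) (by simp)).congr_deriv (by simp)

lemma pd_normSq (v : ℝ × ℝ) :
    pd v (fun p => p.1 ^ 2 + p.2 ^ 2) = fun p => 2 * (v.1 * p.1 + v.2 * p.2) := by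
  funext p
  have hderiv := ((hasFDerivAt_fst (𝕜 := ℝ) (p := p)).pow 2).fun_add (hasFDerivAt_snd.pow 2)
  rw [pd, hderiv.fderiv]
  simp only [add_apply, smul_apply, ContinuousLinearMap.coe_fst', ContinuousLinearMap.coe_snd',
    Nat.add_one_sub_one, pow_one, nsmul_eq_mul, Nat.cast_ofNat, smul_eq_mul]
  ring

lemma pd_pd_normSq (v : ℝ × ℝ) :
    pd v (pd v fun p => p.1 ^ 2 + p.2 ^ 2) = fun _ => 2 * (v.1 ^ 2 + v.2 ^ 2) := by
  rw [pd_normSq]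
  funext p
  have hderiv := (((hasFDerivAt_fst (𝕜 := ℝ) (p := p)).const_mul v.1).fun_add
    (hasFDerivAt_snd.const_mul v.2)).const_mul 2
  rw [pd, hderiv.fderiv]
  simp only [smul_add, add_apply, smul_apply, ContinuousLinearMap.coe_fst',
    ContinuousLinearMap.coe_snd', smul_eq_mul]
  ring

lemma normSq_smul_dirVec (r θ : ℝ) : (r • dirVec θ).1 ^ 2 + (r • dirVec θ).2 ^ 2 = r ^ 2 := by
  simp only [dirVec, Prod.smul_fst, Prod.smul_snd, smul_eq_mul]
  linear_combination r ^ 2 * sin_sq_add_cos_sq θ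

lemma pd_pd_normSq_mul (hφ : ContDiff ℝ ∞ φ) (t θ : ℝ) :
    pd (normalVec θ) (pd (normalVec θ) fun p => (p.1 ^ 2 + p.2 ^ 2) * φ p) (t • dirVec θ) =
      2 * φ (t • dirVec θ) + t ^ 2 * pd (normalVec θ) (pd (normalVec θ) φ) (t • dirVec θ) := by
  have hunit : (normalVec θ).1 ^ 2 + (normalVec θ).2 ^ 2 = 1 := by simp [normalVec]
  have horth : (normalVec θ).1 * (t • dirVec θ).1 + (normalVec θ).2 * (t • dirVec θ).2 = 0 := by
    simp only [normalVec, dirVec, Prod.smul_fst, Prod.smul_snd, smul_eq_mul]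
    ring
  rw [pd_pd_mul _ (by fun_prop) hφ, pd_pd_normSq, pd_normSq]
  simp only [hunit, horth, normSq_smul_dirVec]
  ring

lemma xray_zero_eq (ψ : ℝ × ℝ → ℝ) (θ : ℝ) : xray ψ 0 θ = ∫ t : ℝ, ψ (t • dirVec θ) := by
  simp only [xray_eq, zero_smul, zero_add]

lemma integral_ray_eq_div_euclidNorm {K : ℝ} (hK : ∀ θ, xray φ 0 θ = K) {y : ℝ × ℝ} (hy : y ≠ 0) :
    ∫ t : ℝ, φ (t • y) = K * (euclidNorm y)⁻¹ := by
  obtain ⟨θ, hθ⟩ := exists_eq_euclidNorm_smul_dirVec y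
  have hpos := euclidNorm_pos hy
  have hscale := Measure.integral_comp_mul_right (fun t : ℝ => φ (t • dirVec θ)) (euclidNorm y)
  simp only [mul_smul, ← hθ, ← xray_zero_eq, hK, abs_inv, abs_of_pos hpos, smul_eq_mul] at hscale
  rw [hscale, mul_comm]

lemma euclidNorm_smul_normalVec_add_smul_dirVec (s t θ : ℝ) :
    euclidNorm (s • normalVec θ + t • dirVec θ) = √(s ^ 2 + t ^ 2) := by
  unfold euclidNorm
  congr 1
  simp only [dirVec, normalVec, Prod.fst_add, Prod.snd_add, Prod.smul_fst, Prod.smul_snd,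
    smul_eq_mul]
  linear_combination (s ^ 2 + t ^ 2) * sin_sq_add_cos_sq θ

lemma euclidNorm_dirVec_add_smul_normalVec (θ p : ℝ) :
    euclidNorm (dirVec θ + p • normalVec θ) = √(1 + p ^ 2) := by
  simpa [add_comm] using euclidNorm_smul_normalVec_add_smul_dirVec p 1 θ

lemma dirVec_add_smul_normalVec_ne_zero (θ p : ℝ) : dirVec θ + p • normalVec θ ≠ 0 := fun h => by
  have hnorm := euclidNorm_dirVec_add_smul_normalVec θ p
  have hpos : 0 < √(1 + p ^ 2) := Real.sqrt_pos.2 (by positivity)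
  rw [← hnorm, h] at hpos
  simp [euclidNorm] at hpos

/-- A constant central transform makes `y ↦ ∫ φ(ty) dt` a multiple of `1/|y|`, which determines the
second moment of `∂_n²φ` along the line. -/
lemma integral_sq_mul_pd_pd_normalVec (hφ : ContDiff ℝ ∞ φ) (hc : HasCompactSupport φ) {K : ℝ}
    (hK : ∀ θ, xray φ 0 θ = K) (θ : ℝ) :
    ∫ t : ℝ, t ^ 2 * pd (normalVec θ) (pd (normalVec θ) φ) (t • dirVec θ) = -K := by
  have hray (p : ℝ) : ∫ t : ℝ, φ (t • (dirVec θ + p • normalVec θ)) = K * (√(1 + p ^ 2))⁻¹ := by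
    rw [integral_ray_eq_div_euclidNorm hK (dirVec_add_smul_normalVec_ne_zero θ p),
      euclidNorm_dirVec_add_smul_normalVec]
  simp only [pd_pd_eq_iteratedFDeriv (contDiff_infty.1 hφ 2)]
  rw [← iteratedFDeriv_two_integral_ray hφ hc (dirVec_ne_zero θ),
    iteratedFDeriv_two_eq_iteratedDeriv_line
      (contDiffAt_infty.1 (contDiffAt_integral_ray hφ hc (dirVec_ne_zero θ)) 2)]
  simp only [hray, iteratedDeriv_const_mul_field, iteratedDeriv_two_inv_sqrt_one_add_sq, mul_neg,
    mul_one]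

lemma xrayHess_normSq_mul_zero (hφ : ContDiff ℝ ∞ φ) (hc : HasCompactSupport φ) {K : ℝ}
    (hK : ∀ θ, xray φ 0 θ = K) (θ : ℝ) :
    xrayHess (fun p => (p.1 ^ 2 + p.2 ^ 2) * φ p) 0 θ = K := by
  have hmoment := integral_sq_mul_pd_pd_normalVec hφ hc hK θ
  have hφint : Integrable fun t : ℝ => φ (t • dirVec θ) := by
    simpa using integrable_comp_line hφ.continuous hc 0 (dirVec_ne_zero θ)
  rw [xrayHess, xray_zero_eq]
  simp_rw [pd_pd_normSq_mul hφ]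
  set ψ := pd (normalVec θ) (pd (normalVec θ) φ)
  have hψcont : Continuous ψ := (contDiff_pd (contDiff_pd hφ _) _).continuous
  have hψint : Integrable fun t : ℝ => t ^ 2 * ψ (t • dirVec θ) := by
    obtain ⟨T, -, hT⟩ := exists_line_notMem_tsupport
      (hasCompactSupport_pd (hasCompactSupport_pd hc (normalVec θ)) (normalVec θ)) 0
      (dirVec_ne_zero θ)
    refine Continuous.integrable_of_hasCompactSupport (by fun_prop)
      (HasCompactSupport.intro (isCompact_closedBall (0 : ℝ) T) fun t ht => ?_)
    simpa using Or.inr (image_eq_zero_of_notMem_tsupport (hT t (by simpa using ht)))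
  rw [integral_add (hφint.const_mul 2) hψint, integral_const_mul, ← xray_zero_eq, hK, hmoment]
  ring

end CentralTransform

/-! ### Derivative bounds -/

section DerivBound

variable {E F : Type*} [NormedAddCommGroup E] [NormedSpace ℝ E] [NormedAddCommGroup F]
  [NormedSpace ℝ F] {f g : E → F} {m : ℕ} {C D : ℝ}

/-- The derivatives of `f` of order at most `m` are bounded in norm by `C`. -/
def DerivBound (m : ℕ) (f : E → F) (C : ℝ) : Prop :=
  ∀ j ≤ m, ∀ x, ‖iteratedFDeriv ℝ j f x‖ ≤ C

lemma DerivBound.nonneg (hf : DerivBound m f C) : 0 ≤ C :=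
  (norm_nonneg _).trans (hf 0 m.zero_le 0)

lemma DerivBound.mono (hf : DerivBound m f C) (hCD : C ≤ D) : DerivBound m f D :=
  fun j hj x => (hf j hj x).trans hCD

lemma DerivBound.const (m : ℕ) (c : F) : DerivBound m (fun _ : E => c) ‖c‖ := by
  rintro (_ | j) - x
  · simp
  · simp [iteratedFDeriv_succ_const]

lemma DerivBound.add (hf : DerivBound m f C) (hg : DerivBound m g D) (hf' : ContDiff ℝ m f)
    (hg' : ContDiff ℝ m g) : DerivBound m (fun x => f x + g x) (C + D) := by
  intro j hj x
  have hjm : (j : WithTop ℕ∞) ≤ m := by exact_mod_cast hj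
  rw [fun_iteratedFDeriv_add_apply (hf'.of_le hjm).contDiffAt (hg'.of_le hjm).contDiffAt]
  exact (norm_add_le _ _).trans (add_le_add (hf j hj x) (hg j hj x))

lemma DerivBound.sub (hf : DerivBound m f C) (hg : DerivBound m g D) (hf' : ContDiff ℝ m f)
    (hg' : ContDiff ℝ m g) : DerivBound m (fun x => f x - g x) (C + D) := by
  intro j hj x
  have hjm : (j : WithTop ℕ∞) ≤ m := by exact_mod_cast hj
  rw [fun_iteratedFDeriv_sub_apply (hf'.of_le hjm).contDiffAt (hg'.of_le hjm).contDiffAt]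
  exact (norm_sub_le _ _).trans (add_le_add (hf j hj x) (hg j hj x))

lemma DerivBound.mul {f g : E → ℝ} (hf : DerivBound m f C) (hg : DerivBound m g D)
    (hf' : ContDiff ℝ m f) (hg' : ContDiff ℝ m g) :
    DerivBound m (fun x => f x * g x) (2 ^ m * (C * D)) := by
  intro j hj x
  have hCD : 0 ≤ C * D := mul_nonneg hf.nonneg hg.nonneg
  calc ‖iteratedFDeriv ℝ j (fun x => f x * g x) x‖
      ≤ ∑ i ∈ Finset.range (j + 1),
          (j.choose i : ℝ) * ‖iteratedFDeriv ℝ i f x‖ * ‖iteratedFDeriv ℝ (j - i) g x‖ :=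
        norm_iteratedFDeriv_mul_le hf' hg' x (by exact_mod_cast hj)
    _ ≤ ∑ i ∈ Finset.range (j + 1), (j.choose i : ℝ) * (C * D) := by
        refine Finset.sum_le_sum fun i hi => ?_
        have hij : i ≤ j := Finset.mem_range_succ_iff.1 hi
        rw [mul_assoc]
        gcongr
        · exact hf.nonneg
        · exact hf i (hij.trans hj) x
        · exact hg _ ((Nat.sub_le _ _).trans hj) x
    _ = 2 ^ j * (C * D) := by
        rw [← Finset.sum_mul]
        exact_mod_cast congrArg (fun N : ℕ => (N : ℝ) * (C * D)) (Nat.sum_range_choose j)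
    _ ≤ 2 ^ m * (C * D) := by gcongr; norm_num

lemma exists_derivBound (hf : ContDiff ℝ m f) (hc : HasCompactSupport f) :
    ∃ C, DerivBound m f C := by
  have hbound (j : ℕ) (hj : j ≤ m) : ∃ C, ∀ x, ‖iteratedFDeriv ℝ j f x‖ ≤ C :=
    (hf.continuous_iteratedFDeriv (by exact_mod_cast hj)).bounded_above_of_compact_support
      (hc.iteratedFDeriv j)
  choose! M hM using hbound
  refine ⟨∑ j ∈ Finset.range (m + 1), M j, fun j hj x => (hM j hj x).trans ?_⟩
  refine Finset.single_le_sum (f := M) (fun i hi => ?_) (Finset.mem_range_succ_iff.2 hj)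
  exact (norm_nonneg _).trans (hM i (Finset.mem_range_succ_iff.1 hi) 0)

end DerivBound

section RadialMean

universe u

variable {E F : Type u} [NormedAddCommGroup E] [NormedSpace ℝ E]
  [NormedAddCommGroup F] [NormedSpace ℝ F] {w : ℝ → ℝ} {f : E → F} {T : ℝ}

/-- The mean `x ↦ ∫_{-T}^T w(t) f(tx) dt` of `f` over dilates with the weight `w`. -/
def radialMean (T : ℝ) (w : ℝ → ℝ) (f : E → F) (x : E) : F := ∫ t in (-T)..T, w t • f (t • x)

lemma norm_radialMean_le {W C : ℝ} (hT : 0 ≤ T) (hw : ∀ t, |t| ≤ T → |w t| ≤ W)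
    (hf : ∀ x, ‖f x‖ ≤ C) (x : E) : ‖radialMean T w f x‖ ≤ 2 * T * (W * C) := by
  have hbound (t : ℝ) (ht : t ∈ Set.uIoc (-T) T) : ‖w t • f (t • x)‖ ≤ W * C := by
    rw [Set.uIoc_of_le (by linarith)] at ht
    have hwt := hw t (abs_le.2 ⟨ht.1.le, ht.2⟩)
    rw [norm_smul, Real.norm_eq_abs]
    exact mul_le_mul hwt (hf _) (norm_nonneg _) ((abs_nonneg _).trans hwt)
  refine (intervalIntegral.norm_integral_le_of_norm_le_const hbound).trans_eq ?_
  rw [sub_neg_eq_add, abs_of_nonneg (by linarith)]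
  ring

variable [FiniteDimensional ℝ E]

lemma contDiff_radialMean (hw : Continuous w) (hf : ContDiff ℝ ∞ f) :
    ContDiff ℝ ∞ (radialMean T w f) :=
  contDiff_intervalIntegral_smul hw (hf.comp (contDiff_snd.smul contDiff_fst))

lemma fderiv_radialMean (hw : Continuous w) (hf : ContDiff ℝ ∞ f) :
    fderiv ℝ (radialMean T w f) = radialMean T (fun t => w t * t) (fderiv ℝ f) := by
  funext x
  have hf' : ContDiff ℝ 1 (Function.uncurry fun (x : E) (t : ℝ) => f (t • x)) :=
    (hf.of_le (by simp)).comp (contDiff_snd.smul contDiff_fst)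
  refine (hasFDerivAt_intervalIntegral_smul hw hf' x).fderiv.trans ?_
  simp only [radialMean, fderiv_comp_smul, mul_smul]

lemma norm_iteratedFDeriv_radialMean_le {W C : ℝ} {j : ℕ} (hT : 0 ≤ T) (hw : Continuous w)
    (hW : ∀ t, |t| ≤ T → |w t| ≤ W) (hf : ContDiff ℝ ∞ f)
    (hC : ∀ x, ‖iteratedFDeriv ℝ j f x‖ ≤ C) (x : E) :
    ‖iteratedFDeriv ℝ j (radialMean T w f) x‖ ≤ 2 * T * (W * T ^ j * C) := by
  induction j generalizing F w W with
  | zero => simpa using norm_radialMean_le hT hW (fun x => by simpa using hC x) x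
  | succ j ih =>
    have hWT (t : ℝ) (ht : |t| ≤ T) : |w t * t| ≤ W * T := by
      rw [abs_mul]
      exact mul_le_mul (hW t ht) ht (abs_nonneg _) ((abs_nonneg _).trans (hW t ht))
    rw [← norm_iteratedFDeriv_fderiv, fderiv_radialMean hw hf, pow_succ', ← mul_assoc W]
    exact ih (by fun_prop) hWT (hf.fderiv_right (by simp))
      (fun x => by rw [norm_iteratedFDeriv_fderiv]; exact hC x)

lemma DerivBound.radialMean {W C : ℝ} {m : ℕ} (hT : 1 ≤ T) (hw : Continuous w)
    (hW : ∀ t, |t| ≤ T → |w t| ≤ W) (hf : ContDiff ℝ ∞ f) (hC : DerivBound m f C) :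
    DerivBound m (radialMean T w f) (2 * T * (W * T ^ m * C)) := by
  intro j hj x
  have hT0 : 0 ≤ T := by linarith
  have hW0 : 0 ≤ W := (abs_nonneg _).trans (hW 0 (by simpa using hT0))
  refine (norm_iteratedFDeriv_radialMean_le hT0 hw hW hf (hC j hj) x).trans ?_
  have hC0 := hC.nonneg
  gcongr

end RadialMean

section CoordinateDerivatives

variable {ψ : ℝ × ℝ → ℝ}

lemma contDiff_pd_iterate (hψ : ContDiff ℝ ∞ ψ) (v : ℝ × ℝ) (γ : ℕ) :
    ContDiff ℝ ∞ ((pd v)^[γ] ψ) := by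
  induction γ with
  | zero => exact hψ
  | succ γ ih =>
    rw [Function.iterate_succ_apply']
    exact contDiff_pd ih v

lemma pd_iterate_comm (hψ : ContDiff ℝ ∞ ψ) (u v : ℝ × ℝ) (γ : ℕ) :
    pd u ((pd v)^[γ] ψ) = (pd v)^[γ] (pd u ψ) := by
  induction γ with
  | zero => rfl
  | succ γ ih =>
    rw [Function.iterate_succ_apply', Function.iterate_succ_apply', ← ih,
      pd_comm (contDiff_infty.1 (contDiff_pd_iterate hψ v γ) 2)]

lemma norm_iteratedFDeriv_succ_le_add_pd (hψ : ContDiff ℝ ∞ ψ) (j : ℕ) (p : ℝ × ℝ) :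
    ‖iteratedFDeriv ℝ (j + 1) ψ p‖ ≤
      ‖iteratedFDeriv ℝ j (pd (1, 0) ψ) p‖ + ‖iteratedFDeriv ℝ j (pd (0, 1) ψ) p‖ := by
  let L₁ := ContinuousLinearMap.toSpanSingleton ℝ (ContinuousLinearMap.fst ℝ ℝ ℝ)
  let L₂ := ContinuousLinearMap.toSpanSingleton ℝ (ContinuousLinearMap.snd ℝ ℝ ℝ)
  have hL₁ : ‖L₁‖ ≤ 1 := by
    simp [L₁]
  have hL₂ : ‖L₂‖ ≤ 1 := by
    simp [L₂]
  have hfderiv : fderiv ℝ ψ = L₁ ∘ pd (1, 0) ψ + L₂ ∘ pd (0, 1) ψ := by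
    funext q
    ext <;> simp [L₁, L₂, pd]
  have hpd (v : ℝ × ℝ) : ContDiffAt ℝ j (pd v ψ) p :=
    (contDiff_infty.1 (contDiff_pd hψ v) j).contDiffAt
  have hcomp (L : ℝ →L[ℝ] ℝ × ℝ →L[ℝ] ℝ) (hL : ‖L‖ ≤ 1) (v : ℝ × ℝ) :
      ‖iteratedFDeriv ℝ j (L ∘ pd v ψ) p‖ ≤ ‖iteratedFDeriv ℝ j (pd v ψ) p‖ :=
    (L.norm_iteratedFDeriv_comp_left (hpd v) le_rfl).trans
      (mul_le_of_le_one_left (norm_nonneg _) hL)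
  rw [← norm_iteratedFDeriv_fderiv, hfderiv,
    iteratedFDeriv_add_apply ((hpd _).continuousLinearMap_comp L₁)
      ((hpd _).continuousLinearMap_comp L₂)]
  exact (norm_add_le _ _).trans (add_le_add (hcomp L₁ hL₁ _) (hcomp L₂ hL₂ _))

lemma norm_iteratedFDeriv_le_of_abs_pd_le (hψ : ContDiff ℝ ∞ ψ) {j : ℕ} {p : ℝ × ℝ} {C : ℝ}
    (h : ∀ γ₁ γ₂, γ₁ + γ₂ = j → |(pd (1, 0))^[γ₁] ((pd (0, 1))^[γ₂] ψ) p| ≤ C) :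
    ‖iteratedFDeriv ℝ j ψ p‖ ≤ 2 ^ j * C := by
  induction j generalizing ψ with
  | zero => simpa using h 0 0 rfl
  | succ j ih =>
    have hfst := ih (contDiff_pd hψ (1, 0)) fun γ₁ γ₂ hγ => by
      rw [← pd_iterate_comm hψ, ← Function.iterate_succ_apply]
      exact h (γ₁ + 1) γ₂ (by omega)
    have hsnd := ih (contDiff_pd hψ (0, 1)) fun γ₁ γ₂ hγ => by
      rw [← Function.iterate_succ_apply]
      exact h γ₁ (γ₂ + 1) (by omega)
    calc _ ≤ _ := norm_iteratedFDeriv_succ_le_add_pd hψ j p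
      _ ≤ 2 ^ j * C + 2 ^ j * C := add_le_add hfst hsnd
      _ = 2 ^ (j + 1) * C := by ring

/-- The weight `⟨p⟩ = √(1 + |p|²)` of the Kohn–Nirenberg norm. -/
def japaneseBracket (p : ℝ × ℝ) : ℝ := √(1 + p.1 ^ 2 + p.2 ^ 2)

lemma japaneseBracket_pos (p : ℝ × ℝ) : 0 < japaneseBracket p := Real.sqrt_pos.2 (by positivity)

lemma sq_japaneseBracket (p : ℝ × ℝ) : japaneseBracket p ^ 2 = 1 + p.1 ^ 2 + p.2 ^ 2 :=
  Real.sq_sqrt (by positivity)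

lemma KNle.zpow_mul_norm_iteratedFDeriv_le {C : ℝ} (h : KNle ψ C) (hψ : ContDiff ℝ ∞ ψ) {j : ℕ}
    (hj : j ≤ 3) (p : ℝ × ℝ) :
    japaneseBracket p ^ ((j : ℤ) - 1) * ‖iteratedFDeriv ℝ j ψ p‖ ≤ 2 ^ j * C := by
  have hpos := zpow_pos (japaneseBracket_pos p) ((j : ℤ) - 1)
  rw [← le_div_iff₀' hpos, mul_div_assoc]
  refine norm_iteratedFDeriv_le_of_abs_pd_le hψ fun γ₁ γ₂ hγ => ?_
  subst hγ
  have hγ := h γ₁ γ₂ hj p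
  rw [← japaneseBracket] at hγ
  rw [le_div_iff₀' hpos]
  push_cast at hpos ⊢
  rwa [abs_mul, abs_of_pos hpos] at hγ

end CoordinateDerivatives

/-! ### Annular functions and their dilations -/

section Annulus

variable {ψ : ℝ × ℝ → ℝ} {k : ℕ} {p : ℝ × ℝ}

lemma continuous_euclidNorm : Continuous euclidNorm := by
  unfold euclidNorm
  fun_prop

lemma norm_le_euclidNorm (p : ℝ × ℝ) : ‖p‖ ≤ euclidNorm p :=
  max_le (Real.abs_le_sqrt (le_add_of_nonneg_right (sq_nonneg _)))
    (Real.abs_le_sqrt (le_add_of_nonneg_left (sq_nonneg _)))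

lemma euclidNorm_smul (l : ℝ) (p : ℝ × ℝ) : euclidNorm (l • p) = |l| * euclidNorm p := by
  rw [euclidNorm, euclidNorm, ← Real.sqrt_sq_eq_abs, ← Real.sqrt_mul (sq_nonneg l)]
  congr 1
  simp only [Prod.smul_fst, Prod.smul_snd, smul_eq_mul]
  ring

lemma euclidNorm_smul_dirVec (r θ : ℝ) : euclidNorm (r • dirVec θ) = |r| := by
  rw [euclidNorm, normSq_smul_dirVec, Real.sqrt_sq_eq_abs]

lemma mem_annulus_iff_euclidNorm :
    p ∈ annulus k ↔ 2 ^ k ≤ 2 * euclidNorm p ∧ euclidNorm p ≤ 2 * 2 ^ k := by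
  rw [← pow_succ' 2 k, ← div_le_iff₀' two_pos]
  simp only [annulus, Set.mem_ofPred_eq, zpow_sub_one₀ (two_ne_zero' ℝ), zpow_natCast, euclidNorm,
    div_eq_mul_inv]

lemma mem_annulus_zero_iff_euclidNorm :
    p ∈ annulus 0 ↔ 1 ≤ 2 * euclidNorm p ∧ euclidNorm p ≤ 2 := by
  simpa using mem_annulus_iff_euclidNorm (k := 0)

lemma isClosed_annulus (k : ℕ) : IsClosed (annulus k) :=
  (isClosed_le continuous_const continuous_euclidNorm).inter
    (isClosed_le continuous_euclidNorm continuous_const)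

lemma isCompact_annulus (k : ℕ) : IsCompact (annulus k) := by
  refine (isCompact_closedBall 0 (2 * 2 ^ k)).of_isClosed_subset (isClosed_annulus k) fun p hp => ?_
  rw [mem_closedBall_zero_iff]
  exact (norm_le_euclidNorm p).trans (mem_annulus_iff_euclidNorm.1 hp).2

lemma hasCompactSupport_of_tsupport_subset_annulus (hs : tsupport ψ ⊆ annulus k) :
    HasCompactSupport ψ :=
  (isCompact_annulus k).of_isClosed_subset (isClosed_tsupport ψ) hs

lemma zero_notMem_tsupport_of_subset_annulus (hs : tsupport ψ ⊆ annulus k) :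
    (0 : ℝ × ℝ) ∉ tsupport ψ := fun h => by
  have hle : (2 : ℝ) ^ k ≤ 0 := by
    simpa [euclidNorm] using (mem_annulus_iff_euclidNorm.1 (hs h)).1
  exact hle.not_gt (by positivity)

lemma contDiff_invSq (hψ : ContDiff ℝ ∞ ψ) (h0 : (0 : ℝ × ℝ) ∉ tsupport ψ) :
    ContDiff ℝ ∞ (invSq ψ) := by
  refine contDiff_iff_contDiffAt.2 fun p => ?_
  by_cases hp : p = 0
  · subst hp
    refine (contDiffAt_const (c := (0 : ℝ))).congr_of_eventuallyEq ?_
    filter_upwards [notMem_tsupport_iff_eventuallyEq.1 h0] with p hp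
    simp [invSq, hp]
  · have hnormSq : ContDiff ℝ ∞ fun p : ℝ × ℝ => p.1 ^ 2 + p.2 ^ 2 := by fun_prop
    exact (hnormSq.contDiffAt.inv (normSq_pos_of_ne_zero hp).ne').mul hψ.contDiffAt

lemma hasCompactSupport_invSq (hc : HasCompactSupport ψ) : HasCompactSupport (invSq ψ) :=
  hc.mul_left

lemma normSq_mul_invSq (h0 : (0 : ℝ × ℝ) ∉ tsupport ψ) :
    (fun p => (p.1 ^ 2 + p.2 ^ 2) * invSq ψ p) = ψ := by
  funext p
  by_cases hp : p = 0
  · subst hp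
    simp [image_eq_zero_of_notMem_tsupport h0]
  · exact mul_inv_cancel_left₀ (normSq_pos_of_ne_zero hp).ne' _

lemma integrable_invSq_comp_smul_dirVec (hψ : ContDiff ℝ ∞ ψ) (hs : tsupport ψ ⊆ annulus k)
    (θ : ℝ) : Integrable fun t : ℝ => invSq ψ (t • dirVec θ) := by
  simpa using integrable_comp_line
    (contDiff_invSq hψ (zero_notMem_tsupport_of_subset_annulus hs)).continuous
    (hasCompactSupport_invSq (hasCompactSupport_of_tsupport_subset_annulus hs)) 0
    (dirVec_ne_zero θ)

end Annulus

section UnitAnnulus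

variable {ψ : ℝ × ℝ → ℝ} {C : ℝ}

lemma pd_pd_eq_zero_of_two_lt_euclidNorm (hs : tsupport ψ ⊆ annulus 0) (v : ℝ × ℝ) {p : ℝ × ℝ}
    (hp : 2 < euclidNorm p) : pd v (pd v ψ) p = 0 := by
  refine image_eq_zero_of_notMem_tsupport fun hmem => hp.not_ge ?_
  exact (mem_annulus_zero_iff_euclidNorm.1
    (hs (tsupport_pd_subset _ _ (tsupport_pd_subset _ _ hmem)))).2

lemma xrayHess_eq_zero_of_two_lt_abs (hs : tsupport ψ ⊆ annulus 0) {s : ℝ} (h : 2 < |s|) (θ : ℝ) :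
    xrayHess ψ s θ = 0 := by
  rw [xrayHess, xray_eq]
  refine integral_eq_zero_of_ae (.of_forall fun t =>
    pd_pd_eq_zero_of_two_lt_euclidNorm hs _ (h.trans_le ?_))
  rw [euclidNorm_smul_normalVec_add_smul_dirVec]
  exact Real.abs_le_sqrt (le_add_of_nonneg_right (sq_nonneg t))

lemma xrayHess_eq_intervalIntegral (hs : tsupport ψ ⊆ annulus 0) (s θ : ℝ) :
    xrayHess ψ s θ = ∫ t in (-2 : ℝ)..2,
      pd (normalVec θ) (pd (normalVec θ) ψ) (s • normalVec θ + t • dirVec θ) := by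
  rw [xrayHess, xray_eq]
  refine integral_eq_intervalIntegral_of_forall_abs_lt zero_le_two fun t ht =>
    pd_pd_eq_zero_of_two_lt_euclidNorm hs _ (ht.trans_le ?_)
  rw [euclidNorm_smul_normalVec_add_smul_dirVec]
  exact Real.abs_le_sqrt (le_add_of_nonneg_left (sq_nonneg s))

lemma abs_pd_pd_sub_le (hψ : ContDiff ℝ 3 ψ) (hC : DerivBound 3 ψ C) {v : ℝ × ℝ} (hv : ‖v‖ ≤ 1)
    (p q : ℝ × ℝ) : |pd v (pd v ψ) p - pd v (pd v ψ) q| ≤ C * ‖p - q‖ := by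
  have hlip : ‖iteratedFDeriv ℝ 2 ψ p - iteratedFDeriv ℝ 2 ψ q‖ ≤ C * ‖p - q‖ :=
    convex_univ.norm_image_sub_le_of_norm_fderiv_le (𝕜 := ℝ)
      (fun x _ => (hψ.differentiable_iteratedFDeriv (by norm_num)) x)
      (fun x _ => by rw [norm_fderiv_iteratedFDeriv]; exact hC 3 le_rfl x)
      (Set.mem_univ q) (Set.mem_univ p)
  have hψ₂ : ContDiff ℝ 2 ψ := hψ.of_le (by norm_num)
  rw [pd_pd_eq_iteratedFDeriv hψ₂, pd_pd_eq_iteratedFDeriv hψ₂,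
    ← sub_apply]
  refine (ContinuousMultilinearMap.le_opNorm _ _).trans
    ((mul_le_of_le_one_right (norm_nonneg _) ?_).trans hlip)
  simpa [Fin.prod_univ_two] using mul_le_one₀ hv (norm_nonneg v) hv

lemma norm_normalVec_le (θ : ℝ) : ‖normalVec θ‖ ≤ 1 :=
  max_le (by simpa [normalVec] using abs_sin_le_one θ) (abs_cos_le_one θ)

lemma abs_xrayHess_sub_le (hψ : ContDiff ℝ ∞ ψ) (hs : tsupport ψ ⊆ annulus 0)
    (hC : DerivBound 3 ψ C) (s θ : ℝ) :
    |xrayHess ψ s θ - xrayHess ψ 0 θ| ≤ 4 * C * |s| := by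
  have hcont : Continuous (pd (normalVec θ) (pd (normalVec θ) ψ)) :=
    (contDiff_pd (contDiff_pd hψ _) _).continuous
  have hpointwise (t : ℝ) :
      ‖pd (normalVec θ) (pd (normalVec θ) ψ) (s • normalVec θ + t • dirVec θ) -
        pd (normalVec θ) (pd (normalVec θ) ψ) ((0 : ℝ) • normalVec θ + t • dirVec θ)‖ ≤
        C * |s| := by
    refine (abs_pd_pd_sub_le (contDiff_infty.1 hψ 3) hC (norm_normalVec_le θ) _ _).trans
      (mul_le_mul_of_nonneg_left ?_ hC.nonneg)
    rw [add_sub_add_right_eq_sub, ← sub_smul, sub_zero, norm_smul]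
    exact mul_le_of_le_one_right (norm_nonneg s) (norm_normalVec_le θ)
  rw [xrayHess_eq_intervalIntegral hs, xrayHess_eq_intervalIntegral hs,
    ← intervalIntegral.integral_sub (Continuous.intervalIntegrable (by fun_prop) _ _)
      (Continuous.intervalIntegrable (by fun_prop) _ _)]
  refine (intervalIntegral.norm_integral_le_of_norm_le_const
    fun t _ => hpointwise t).trans_eq ?_
  rw [show |(2 : ℝ) - -2| = 4 by norm_num]
  ring

lemma abs_xrayHess_sub_le_of_xray_invSq_eq (hψ : ContDiff ℝ ∞ ψ) (hs : tsupport ψ ⊆ annulus 0)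
    (hC : DerivBound 3 ψ C) {K : ℝ} (hK : ∀ θ, xray (invSq ψ) 0 θ = K) (s θ : ℝ) :
    |xrayHess ψ s θ - K| ≤ 4 * C * |s| := by
  have h0 := zero_notMem_tsupport_of_subset_annulus hs
  have hcentral := xrayHess_normSq_mul_zero (contDiff_invSq hψ h0)
    (hasCompactSupport_invSq (hasCompactSupport_of_tsupport_subset_annulus hs)) hK θ
  rw [normSq_mul_invSq h0] at hcentral
  rw [← hcentral]
  exact abs_xrayHess_sub_le hψ hs hC s θ

end UnitAnnulus

/-! ### The correction at unit scale -/

section CentralCorrection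

variable {ψ : ℝ × ℝ → ℝ} {q : ℝ}

/-- A continuous truncation of the weight `t⁻²`, with which it agrees for `|t| ≥ 1/4`. -/
def invSqWeight (t : ℝ) : ℝ := (max (t ^ 2) (1 / 16))⁻¹

lemma continuous_invSqWeight : Continuous invSqWeight :=
  Continuous.inv₀ (by fun_prop) fun t => (lt_max_of_lt_right (by norm_num)).ne'

lemma abs_invSqWeight_le (t : ℝ) : |invSqWeight t| ≤ 16 := by
  have hmax : (1 / 16 : ℝ) ≤ max (t ^ 2) (1 / 16) := le_max_right _ _
  rw [invSqWeight, abs_of_nonneg (inv_nonneg.2 (by linarith))]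
  exact inv_le_of_inv_le₀ (by norm_num) (by linarith)

lemma invSqWeight_mul_comp_smul (hs : tsupport ψ ⊆ annulus 0) {r : ℝ} (hr : 1 ≤ 2 * |r|)
    (hr' : |r| ≤ 2) (t θ : ℝ) :
    invSqWeight t * ψ (t • r • dirVec θ) = r ^ 2 * invSq ψ ((t * r) • dirVec θ) := by
  rw [invSq, normSq_smul_dirVec, smul_smul]
  by_cases hmem : (t * r) • dirVec θ ∈ tsupport ψ
  · have hnorm := (mem_annulus_zero_iff_euclidNorm.1 (hs hmem)).1
    rw [euclidNorm_smul_dirVec, abs_mul] at hnorm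
    have ht : 1 / 4 ≤ |t| := by nlinarith [abs_nonneg t]
    have hr0 : r ≠ 0 := abs_pos.1 (by linarith)
    have ht0 : t ≠ 0 := abs_pos.1 (by linarith)
    rw [invSqWeight, max_eq_left (by rw [← sq_abs]; nlinarith), mul_pow]
    field_simp
  · simp [image_eq_zero_of_notMem_tsupport hmem]

lemma radialMean_invSqWeight_smul_dirVec (hs : tsupport ψ ⊆ annulus 0) {r : ℝ}
    (hr : 1 ≤ 2 * |r|) (hr' : |r| ≤ 2) (θ : ℝ) :
    radialMean 4 invSqWeight ψ (r • dirVec θ) = |r| * xray (invSq ψ) 0 θ := by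
  have hr0 : 0 < |r| := by linarith
  simp only [radialMean, smul_eq_mul]
  rw [← integral_eq_intervalIntegral_of_forall_abs_lt (by norm_num)]
  · simp_rw [invSqWeight_mul_comp_smul hs hr hr']
    rw [integral_const_mul, Measure.integral_comp_mul_right (fun u => invSq ψ (u • dirVec θ)),
      xray_zero_eq, smul_eq_mul, abs_inv, ← sq_abs]
    field_simp
  · intro t ht
    have hout : t • r • dirVec θ ∉ tsupport ψ := fun hmem => by
      have hnorm := (mem_annulus_zero_iff_euclidNorm.1 (hs hmem)).2
      rw [smul_smul, euclidNorm_smul_dirVec, abs_mul] at hnorm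
      nlinarith
    rw [image_eq_zero_of_notMem_tsupport hout, mul_zero]

/-- The profile of `annularBump` as a function of `|p|²`. -/
def annularProfile : ContDiffBump (1 : ℝ) := ⟨1 / 4, 1 / 2, by norm_num, by norm_num⟩

/-- A radial bump function `η` on the unit annulus with `∫ |t|⁻¹ η(tv) dt = 1` for unit
vectors `v`. The factor `|p|²` in front of the profile is there to be cancelled by `invSq`. -/
def annularBump (p : ℝ × ℝ) : ℝ :=
  (∫ t : ℝ, annularProfile (t ^ 2) * |t|)⁻¹ *
    ((p.1 ^ 2 + p.2 ^ 2) * annularProfile (p.1 ^ 2 + p.2 ^ 2))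

lemma annularProfile_eq_zero {t : ℝ} (ht : t ≤ 1 / 2 ∨ 3 / 2 ≤ t) : annularProfile t = 0 := by
  refine annularProfile.zero_of_le_dist ?_
  rw [Real.dist_eq, show annularProfile.rOut = 1 / 2 from rfl, le_abs]
  rcases ht with ht | ht
  · exact .inr (by linarith)
  · exact .inl (by linarith)

lemma integral_annularProfile_pos : 0 < ∫ t : ℝ, annularProfile (t ^ 2) * |t| := by
  have hcont : Continuous fun t : ℝ => annularProfile (t ^ 2) * |t| :=
    (annularProfile.continuous.comp (by fun_prop)).mul continuous_abs
  refine hcont.integral_pos_of_hasCompactSupport_nonneg_nonzero (x := 1)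
    (HasCompactSupport.intro (isCompact_closedBall (0 : ℝ) 2) fun t ht => ?_)
    (fun t => mul_nonneg annularProfile.nonneg (abs_nonneg t)) ?_
  · have ht' : 2 < |t| := by simpa using ht
    rw [annularProfile_eq_zero (.inr (by rw [← sq_abs]; nlinarith)), zero_mul]
  · simp [annularProfile.one_of_mem_closedBall (x := 1) (by simp [annularProfile])]

lemma contDiff_annularBump : ContDiff ℝ ∞ annularBump := by
  have hnormSq : ContDiff ℝ ∞ fun p : ℝ × ℝ => p.1 ^ 2 + p.2 ^ 2 := by fun_prop
  exact contDiff_const.mul (hnormSq.mul (annularProfile.contDiff.comp hnormSq))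

lemma annularBump_nonneg (p : ℝ × ℝ) : 0 ≤ annularBump p :=
  mul_nonneg (inv_nonneg.2 integral_annularProfile_pos.le)
    (mul_nonneg (by positivity) annularProfile.nonneg)

lemma tsupport_annularBump_subset : tsupport annularBump ⊆ annulus 0 := by
  refine closure_minimal (fun p hp => ?_) (isClosed_annulus 0)
  have hprofile : annularProfile (p.1 ^ 2 + p.2 ^ 2) ≠ 0 :=
    right_ne_zero_of_mul (right_ne_zero_of_mul hp)
  have hbounds := mt annularProfile_eq_zero hprofile
  push Not at hbounds
  rw [← sq_euclidNorm] at hbounds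
  have hnonneg : 0 ≤ euclidNorm p := Real.sqrt_nonneg _
  exact mem_annulus_zero_iff_euclidNorm.2 ⟨by nlinarith, by nlinarith⟩

lemma invSq_annularBump_smul_dirVec (t θ : ℝ) :
    invSq annularBump (t • dirVec θ) =
      (∫ t : ℝ, annularProfile (t ^ 2) * |t|)⁻¹ * annularProfile (t ^ 2) := by
  rw [invSq, annularBump, normSq_smul_dirVec]
  rcases eq_or_ne t 0 with rfl | ht
  · simp [annularProfile_eq_zero]
  · field_simp

lemma integral_invSq_annularBump_mul_abs (θ : ℝ) :
    ∫ t : ℝ, invSq annularBump (t • dirVec θ) * |t| = 1 := by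
  simp_rw [invSq_annularBump_smul_dirVec, mul_assoc]
  rw [integral_const_mul, inv_mul_cancel₀ integral_annularProfile_pos.ne']

lemma xray_invSq_annularBump (θ : ℝ) :
    xray (invSq annularBump) 0 θ = xray (invSq annularBump) 0 0 := by
  simp only [xray_zero_eq, invSq_annularBump_smul_dirVec]

lemma xray_invSq_annularBump_nonneg : 0 ≤ xray (invSq annularBump) 0 0 :=
  integral_nonneg fun _ => mul_nonneg (by positivity) (annularBump_nonneg _)

/-- The function `ψ - η(2q + |x|T(|x|⁻²ψ)(0, arg x))`, where `η` is `annularBump`: the normalization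
of `η` makes its central X-ray transform with the weight `|x|⁻²` independent of the direction. -/
def centralCorrection (ψ : ℝ × ℝ → ℝ) (q : ℝ) (p : ℝ × ℝ) : ℝ :=
  ψ p - annularBump p * (2 * q + radialMean 4 invSqWeight ψ p)

lemma centralCorrection_smul_dirVec (hs : tsupport ψ ⊆ annulus 0) (q r θ : ℝ) :
    centralCorrection ψ q (r • dirVec θ) = ψ (r • dirVec θ) -
      annularBump (r • dirVec θ) * (2 * q + |r| * xray (invSq ψ) 0 θ) := by
  rw [centralCorrection]
  by_cases hmem : r • dirVec θ ∈ tsupport annularBump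
  · have hr := mem_annulus_zero_iff_euclidNorm.1 (tsupport_annularBump_subset hmem)
    rw [euclidNorm_smul_dirVec] at hr
    rw [radialMean_invSqWeight_smul_dirVec hs hr.1 hr.2]
  · rw [image_eq_zero_of_notMem_tsupport hmem, zero_mul, zero_mul]

lemma contDiff_centralCorrection (hψ : ContDiff ℝ ∞ ψ) (q : ℝ) :
    ContDiff ℝ ∞ (centralCorrection ψ q) :=
  hψ.sub (contDiff_annularBump.mul
    (contDiff_const.add (contDiff_radialMean continuous_invSqWeight hψ)))

lemma tsupport_centralCorrection_subset (hs : tsupport ψ ⊆ annulus 0) (q : ℝ) :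
    tsupport (centralCorrection ψ q) ⊆ annulus 0 := by
  refine closure_minimal (fun p hp => ?_) (isClosed_annulus 0)
  contrapose! hp
  simp [centralCorrection, image_eq_zero_of_notMem_tsupport fun h => hp (hs h),
    image_eq_zero_of_notMem_tsupport fun h => hp (tsupport_annularBump_subset h)]

lemma centralCorrection_le (hs : tsupport ψ ⊆ annulus 0) (hq : 0 ≤ q)
    (hlow : ∀ θ, -q ≤ xray (invSq ψ) 0 θ) (p : ℝ × ℝ) : centralCorrection ψ q p ≤ ψ p := by
  obtain ⟨θ, hθ⟩ := exists_eq_euclidNorm_smul_dirVec p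
  rw [hθ, centralCorrection_smul_dirVec hs]
  generalize euclidNorm p = r
  by_cases hmem : r • dirVec θ ∈ tsupport annularBump
  · have hr := (mem_annulus_zero_iff_euclidNorm.1 (tsupport_annularBump_subset hmem)).2
    rw [euclidNorm_smul_dirVec] at hr
    refine sub_le_self _ (mul_nonneg (annularBump_nonneg _) ?_)
    nlinarith [hlow θ, abs_nonneg r]
  · rw [image_eq_zero_of_notMem_tsupport hmem, zero_mul, sub_zero]

lemma xray_invSq_centralCorrection (hψ : ContDiff ℝ ∞ ψ) (hs : tsupport ψ ⊆ annulus 0)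
    (q θ : ℝ) :
    xray (invSq (centralCorrection ψ q)) 0 θ = -(2 * xray (invSq annularBump) 0 0 * q) := by
  have hψint := integrable_invSq_comp_smul_dirVec hψ hs θ
  have hbump := (integrable_invSq_comp_smul_dirVec contDiff_annularBump
    tsupport_annularBump_subset θ).const_mul (2 * q)
  have hbump_abs : Integrable fun t : ℝ => invSq annularBump (t • dirVec θ) * |t| :=
    .of_integral_ne_zero (by rw [integral_invSq_annularBump_mul_abs]; exact one_ne_zero)
  have hsplit (t : ℝ) : invSq (centralCorrection ψ q) (t • dirVec θ) =
      invSq ψ (t • dirVec θ) - (2 * q * invSq annularBump (t • dirVec θ) +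
        xray (invSq ψ) 0 θ * (invSq annularBump (t • dirVec θ) * |t|)) := by
    rw [invSq, centralCorrection_smul_dirVec hs, invSq, invSq]
    ring
  rw [xray_zero_eq]
  simp_rw [hsplit]
  rw [integral_sub hψint (hbump.fun_add (hbump_abs.const_mul _)),
    integral_add hbump (hbump_abs.const_mul _), integral_const_mul, integral_const_mul,
    integral_invSq_annularBump_mul_abs, ← xray_zero_eq, ← xray_zero_eq, xray_invSq_annularBump]
  ring

lemma exists_derivBound_centralCorrection (m : ℕ) (C Q : ℝ) :
    ∃ D, ∀ ψ : ℝ × ℝ → ℝ, ∀ q, ContDiff ℝ ∞ ψ → DerivBound m ψ C → |q| ≤ Q →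
      DerivBound m (centralCorrection ψ q) D := by
  obtain ⟨M, hM⟩ := exists_derivBound (contDiff_infty.1 contDiff_annularBump m)
    (hasCompactSupport_of_tsupport_subset_annulus tsupport_annularBump_subset)
  refine ⟨C + 2 ^ m * (M * (2 * Q + 2 * 4 * (16 * 4 ^ m * C))), fun ψ q hψ hC hq => ?_⟩
  have hmean := contDiff_radialMean (T := 4) continuous_invSqWeight hψ
  have hmeanBound := hC.radialMean (T := 4) (by norm_num) continuous_invSqWeight
    (fun t _ => abs_invSqWeight_le t) hψ
  have hconst : DerivBound m (fun _ : ℝ × ℝ => 2 * q) (2 * Q) :=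
    (DerivBound.const m _).mono (by rw [norm_mul, Real.norm_ofNat, Real.norm_eq_abs]; linarith)
  have hfactor := hconst.add hmeanBound contDiff_const (contDiff_infty.1 hmean m)
  exact hC.sub (hM.mul hfactor (contDiff_infty.1 contDiff_annularBump m)
    (contDiff_const.add (contDiff_infty.1 hmean m))) (contDiff_infty.1 hψ m)
    ((contDiff_infty.1 contDiff_annularBump m).mul
      (contDiff_const.add (contDiff_infty.1 hmean m)))

end CentralCorrection

/-! ### The corrections at dyadic scales and their sum -/

section Dilate

variable {ψ φ : ℝ × ℝ → ℝ} {k : ℕ} {l C : ℝ}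

/-- The dilation `x ↦ l ψ(x/l)`, under which symbols of order one and the central X-ray transform
of `|x|⁻²ψ` are invariant. -/
def dilate (l : ℝ) (ψ : ℝ × ℝ → ℝ) (p : ℝ × ℝ) : ℝ := l * ψ (l⁻¹ • p)

lemma contDiff_dilate (hψ : ContDiff ℝ ∞ ψ) (l : ℝ) : ContDiff ℝ ∞ (dilate l ψ) :=
  contDiff_const.mul (hψ.comp (contDiff_id.const_smul l⁻¹))

lemma hasCompactSupport_dilate (hc : HasCompactSupport ψ) (hl : l ≠ 0) :
    HasCompactSupport (dilate l ψ) :=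
  (hc.comp_smul (inv_ne_zero hl)).mul_left

lemma dilate_le_dilate (hl : 0 ≤ l) (h : ∀ p, ψ p ≤ φ p) (p : ℝ × ℝ) :
    dilate l ψ p ≤ dilate l φ p :=
  mul_le_mul_of_nonneg_left (h _) hl

lemma dilate_dilate_inv (hl : l ≠ 0) (ψ : ℝ × ℝ → ℝ) : dilate l (dilate l⁻¹ ψ) = ψ := by
  funext p
  simp [dilate, hl]

lemma tsupport_dilate_inv_subset (hs : tsupport ψ ⊆ annulus k) :
    tsupport (dilate (2 ^ k)⁻¹ ψ) ⊆ annulus 0 := by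
  refine closure_minimal (fun p hp => ?_) (isClosed_annulus 0)
  have hmem := mem_annulus_iff_euclidNorm.1 (hs (subset_tsupport _ (right_ne_zero_of_mul hp)))
  have hpos : (0 : ℝ) < 2 ^ k := by positivity
  rw [inv_inv, euclidNorm_smul, abs_of_pos hpos] at hmem
  exact mem_annulus_zero_iff_euclidNorm.2 ⟨by nlinarith [hmem.1], by nlinarith [hmem.2]⟩

lemma norm_iteratedFDeriv_dilate_inv (hψ : ContDiff ℝ ∞ ψ) (hl : 0 < l) (j : ℕ) (p : ℝ × ℝ) :
    ‖iteratedFDeriv ℝ j (dilate l⁻¹ ψ) p‖ =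
      l ^ ((j : ℤ) - 1) * ‖iteratedFDeriv ℝ j ψ (l • p)‖ := by
  have hψj := contDiff_infty.1 hψ j
  have hcomp : ContDiff ℝ j fun p => ψ (l • p) := hψj.comp (contDiff_id.const_smul l)
  have hdilate : dilate l⁻¹ ψ = fun p => l⁻¹ • ψ (l • p) := by
    funext p
    simp [dilate]
  rw [hdilate, iteratedFDeriv_const_smul_apply' hcomp.contDiffAt,
    iteratedFDeriv_comp_const_smul l hψj, norm_smul, norm_smul, norm_pow, norm_inv,
    Real.norm_of_nonneg hl.le, ← mul_assoc, zpow_sub_one₀ hl.ne', zpow_natCast, mul_comm l⁻¹]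

lemma zpow_sub_one_le {J : ℝ} (hl : 0 < l) (hJ : 0 < J) (hlJ : l ≤ 2 * J) (hJl : J ≤ 4 * l)
    {j : ℕ} (hj : j ≤ 3) : l ^ ((j : ℤ) - 1) ≤ 4 * J ^ ((j : ℤ) - 1) := by
  interval_cases j
  · simp only [Nat.cast_zero, zero_sub, zpow_neg_one]
    rw [inv_le_iff_one_le_mul₀ hl]
    field_simp
    linarith
  · norm_num
  · simp only [Nat.cast_ofNat, Int.reduceSub, zpow_one]
    linarith
  · have hsq : l ^ 2 ≤ (2 * J) ^ 2 := pow_le_pow_left₀ hl.le hlJ 2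
    simp only [Nat.cast_ofNat, Int.reduceSub, zpow_ofNat]
    linarith

lemma derivBound_dilate_inv (hψ : ContDiff ℝ ∞ ψ) (hs : tsupport ψ ⊆ annulus k)
    (hKN : KNle ψ C) : DerivBound 3 (dilate (2 ^ k)⁻¹ ψ) (32 * C) := by
  intro j hj p
  have hpos : (0 : ℝ) < 2 ^ k := by positivity
  have hC : 0 ≤ C := (abs_nonneg _).trans (hKN 0 0 (by norm_num) 0)
  rw [norm_iteratedFDeriv_dilate_inv hψ hpos]
  generalize (2 : ℝ) ^ k • p = x
  by_cases hmem : x ∈ tsupport ψ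
  · obtain ⟨hlow, hup⟩ := mem_annulus_iff_euclidNorm.1 (hs hmem)
    have hJ := japaneseBracket_pos x
    have hsq : japaneseBracket x ^ 2 = 1 + euclidNorm x ^ 2 := by
      rw [sq_japaneseBracket, sq_euclidNorm, add_assoc]
    have hone : (1 : ℝ) ≤ 2 ^ k := one_le_pow₀ one_le_two
    calc (2 ^ k) ^ ((j : ℤ) - 1) * ‖iteratedFDeriv ℝ j ψ x‖
        ≤ 4 * japaneseBracket x ^ ((j : ℤ) - 1) * ‖iteratedFDeriv ℝ j ψ x‖ := by
          gcongr
          exact zpow_sub_one_le hpos hJ (by nlinarith) (by nlinarith) hj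
      _ ≤ 4 * (2 ^ j * C) := by
          rw [mul_assoc]
          exact mul_le_mul_of_nonneg_left (hKN.zpow_mul_norm_iteratedFDeriv_le hψ hj x)
            (by norm_num)
      _ ≤ 4 * (2 ^ 3 * C) := by gcongr; norm_num
      _ = 32 * C := by ring
  · rw [image_eq_zero_of_notMem_tsupport fun h => hmem (tsupport_iteratedFDeriv_subset j h),
      norm_zero, mul_zero]
    positivity

lemma xray_invSq_dilate (hl : 0 < l) (ψ : ℝ × ℝ → ℝ) (θ : ℝ) :
    xray (invSq (dilate l ψ)) 0 θ = xray (invSq ψ) 0 θ := by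
  have hpointwise (t : ℝ) :
      invSq (dilate l ψ) (t • dirVec θ) = l⁻¹ * invSq ψ ((l⁻¹ * t) • dirVec θ) := by
    simp only [invSq, dilate, normSq_smul_dirVec, smul_smul]
    rw [mul_pow]
    field_simp
  simp only [xray_zero_eq, hpointwise]
  rw [integral_const_mul, Measure.integral_comp_mul_left (fun t => invSq ψ (t • dirVec θ)),
    inv_inv, abs_of_pos hl, smul_eq_mul, inv_mul_cancel_left₀ hl.ne']

lemma pd_dilate (hψ : Differentiable ℝ ψ) (hl : l ≠ 0) (v p : ℝ × ℝ) :
    pd v (dilate l ψ) p = pd v ψ (l⁻¹ • p) := by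
  have hcomp : Differentiable ℝ fun p => ψ (l⁻¹ • p) := hψ.comp (differentiable_id.const_smul l⁻¹)
  change fderiv ℝ (fun p => l • ψ (l⁻¹ • p)) p v = _
  rw [fderiv_fun_const_smul (hcomp p), fderiv_comp_smul, smul_smul, mul_inv_cancel₀ hl, one_smul,
    pd]

lemma pd_comp_smul (ψ : ℝ × ℝ → ℝ) (c : ℝ) (v p : ℝ × ℝ) :
    pd v (fun p => ψ (c • p)) p = c * pd v ψ (c • p) := by
  rw [pd, fderiv_comp_smul]
  rfl

lemma xrayHess_dilate (hψ : ContDiff ℝ ∞ ψ) (hl : 0 < l) (s θ : ℝ) :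
    xrayHess (dilate l ψ) s θ = xrayHess ψ (l⁻¹ * s) θ := by
  have hpd (p : ℝ × ℝ) : pd (normalVec θ) (pd (normalVec θ) (dilate l ψ)) p =
      l⁻¹ * pd (normalVec θ) (pd (normalVec θ) ψ) (l⁻¹ • p) := by
    rw [funext (pd_dilate (hψ.differentiable (by simp)) hl.ne' _), pd_comp_smul]
  simp only [xrayHess, xray_eq, hpd, smul_add, smul_smul]
  rw [integral_const_mul, Measure.integral_comp_mul_left
    (fun t => pd (normalVec θ) (pd (normalVec θ) ψ) ((l⁻¹ * s) • normalVec θ + t • dirVec θ)),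
    inv_inv, abs_of_pos hl, smul_eq_mul, inv_mul_cancel_left₀ hl.ne']

lemma exists_abs_xray_invSq_le (hψ : ContDiff ℝ ∞ ψ) (hs : tsupport ψ ⊆ annulus k) :
    ∃ B, ∀ θ, |xray (invSq ψ) 0 θ| ≤ B := by
  obtain ⟨B, hB⟩ := (contDiff_invSq hψ
    (zero_notMem_tsupport_of_subset_annulus hs)).continuous.bounded_above_of_compact_support
    (hasCompactSupport_invSq (hasCompactSupport_of_tsupport_subset_annulus hs))
  refine ⟨B * |2 * 2 ^ k - -(2 * 2 ^ k)|, fun θ => ?_⟩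
  rw [xray_zero_eq, integral_eq_intervalIntegral_of_forall_abs_lt (T := 2 * 2 ^ k) (by positivity)]
  · exact intervalIntegral.norm_integral_le_of_norm_le_const fun t _ => hB _
  · intro t ht
    have hout : t • dirVec θ ∉ tsupport ψ := fun hmem => by
      have hnorm := (mem_annulus_iff_euclidNorm.1 (hs hmem)).2
      rw [euclidNorm_smul_dirVec] at hnorm
      exact ht.not_ge hnorm
    rw [invSq, image_eq_zero_of_notMem_tsupport hout, mul_zero]

lemma neg_qOf_le_xray (hψ : ContDiff ℝ ∞ ψ) (hs : tsupport ψ ⊆ annulus k) (θ : ℝ) :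
    -qOf ψ ≤ xray (invSq ψ) 0 θ := by
  obtain ⟨B, hB⟩ := exists_abs_xray_invSq_le hψ hs
  rw [qOf, neg_neg]
  refine ciInf_le ⟨-B, ?_⟩ θ
  rintro _ ⟨η, rfl⟩
  exact (abs_le.1 (hB η)).1

lemma qOf_nonneg (hψ : ContDiff ℝ ∞ ψ) (hs : tsupport ψ ⊆ annulus k) (hneg : ∀ p, ψ p ≤ 0) :
    0 ≤ qOf ψ := by
  have hle := neg_qOf_le_xray hψ hs 0
  have hnonpos : xray (invSq ψ) 0 0 ≤ 0 :=
    integral_nonpos fun t => mul_nonpos_of_nonneg_of_nonpos (by positivity) (hneg _)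
  linarith

lemma qOf_zero : qOf 0 = 0 := by
  simp [qOf, xray, invSq]

end Dilate

section DyadicCorrection

variable {ψ : ℝ × ℝ → ℝ} {k : ℕ} {C : ℝ}

/-- The conditions on the summand of the weight at scale `2 ^ k`. -/
structure IsDyadicPiece (k : ℕ) (C : ℝ) (ψ : ℝ × ℝ → ℝ) : Prop where
  contDiff : ContDiff ℝ ∞ ψ
  tsupport_subset : tsupport ψ ⊆ annulus k
  nonpos : ∀ p, ψ p ≤ 0
  knLe : KNle ψ C

/-- The minorant of a summand of the weight at scale `2 ^ k`, obtained by carrying out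
`centralCorrection` at unit scale. -/
def dyadicCorrection (k : ℕ) (ψ : ℝ × ℝ → ℝ) : ℝ × ℝ → ℝ :=
  dilate (2 ^ k) (centralCorrection (dilate (2 ^ k)⁻¹ ψ) (qOf ψ))

lemma contDiff_dyadicCorrection (hψ : ContDiff ℝ ∞ ψ) (k : ℕ) :
    ContDiff ℝ ∞ (dyadicCorrection k ψ) :=
  contDiff_dilate (contDiff_centralCorrection (contDiff_dilate hψ _) _) _

lemma hasCompactSupport_dyadicCorrection (hs : tsupport ψ ⊆ annulus k) :
    HasCompactSupport (dyadicCorrection k ψ) :=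
  hasCompactSupport_dilate (hasCompactSupport_of_tsupport_subset_annulus
    (tsupport_centralCorrection_subset (tsupport_dilate_inv_subset hs) _)) (by positivity)

namespace IsDyadicPiece

lemma qOf_nonneg (h : IsDyadicPiece k C ψ) : 0 ≤ qOf ψ :=
  _root_.qOf_nonneg h.contDiff h.tsupport_subset h.nonpos

lemma dyadicCorrection_le (h : IsDyadicPiece k C ψ) (p : ℝ × ℝ) : dyadicCorrection k ψ p ≤ ψ p := by
  have hpos : (0 : ℝ) < 2 ^ k := by positivity
  conv_rhs => rw [← dilate_dilate_inv hpos.ne' ψ]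
  refine dilate_le_dilate hpos.le (centralCorrection_le (tsupport_dilate_inv_subset
    h.tsupport_subset) h.qOf_nonneg fun θ => ?_) p
  rw [xray_invSq_dilate (inv_pos.2 hpos)]
  exact neg_qOf_le_xray h.contDiff h.tsupport_subset θ

end IsDyadicPiece

lemma exists_xrayHess_dyadicCorrection_ge (C Q : ℝ) : ∃ D, 0 ≤ D ∧ ∀ k ψ, IsDyadicPiece k C ψ →
    qOf ψ ≤ Q → ∀ s θ,
      -(2 * xray (invSq annularBump) 0 0 * qOf ψ) -
        D * (if |s| / 2 ^ k ≤ 2 then |s| / 2 ^ k else 0) ≤ xrayHess (dyadicCorrection k ψ) s θ := by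
  obtain ⟨D, hD⟩ := exists_derivBound_centralCorrection 3 (32 * C) Q
  refine ⟨4 * max D 0, by positivity, fun k ψ hψ hq s θ => ?_⟩
  have hpos : (0 : ℝ) < 2 ^ k := by positivity
  have hunit := contDiff_dilate hψ.contDiff (2 ^ k)⁻¹
  have hannulus := tsupport_dilate_inv_subset hψ.tsupport_subset
  have hcorr := tsupport_centralCorrection_subset hannulus (qOf ψ)
  have habs : |s| / 2 ^ k = |(2 ^ k)⁻¹ * s| := by
    rw [abs_mul, abs_inv, abs_of_pos hpos, div_eq_inv_mul]
  rw [dyadicCorrection, xrayHess_dilate (contDiff_centralCorrection hunit _) hpos, habs]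
  split_ifs with hs
  · have hbound := (hD _ _ hunit (derivBound_dilate_inv hψ.contDiff hψ.tsupport_subset hψ.knLe)
      ((abs_of_nonneg hψ.qOf_nonneg).trans_le hq)).mono (le_max_left D 0)
    have hclose := abs_xrayHess_sub_le_of_xray_invSq_eq (contDiff_centralCorrection hunit _) hcorr
      hbound (xray_invSq_centralCorrection hunit hannulus _) ((2 ^ k)⁻¹ * s) θ
    linarith [(abs_le.1 hclose).1]
  · rw [xrayHess_eq_zero_of_two_lt_abs hcorr (not_le.1 hs), mul_zero, sub_zero, neg_nonpos]
    exact mul_nonneg (mul_nonneg zero_le_two xray_invSq_annularBump_nonneg) hψ.qOf_nonneg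

end DyadicCorrection

section Summation

lemma sum_dyadic_le_max (a : ℝ) (N : ℕ) :
    ∑ k ∈ Finset.range N, (if a / 2 ^ (k + 1) ≤ 2 then a / 2 ^ (k + 1) else 0) ≤
      max 0 (4 - a / 2 ^ N) := by
  induction N with
  | zero => simp
  | succ N ih =>
    have hdouble : a / 2 ^ N = 2 * (a / 2 ^ (N + 1)) := by
      rw [pow_succ]
      field_simp
    rw [hdouble] at ih
    rw [Finset.sum_range_succ]
    split_ifs with h
    · rw [max_eq_right (by linarith)] at ih
      exact le_max_of_le_right (by linarith)
    · rw [max_eq_left (by linarith)] at ih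
      exact le_max_of_le_left (by linarith)

lemma sum_dyadic_le_four {a : ℝ} (ha : 0 ≤ a) (N : ℕ) :
    ∑ k ∈ Finset.range N, (if a / 2 ^ (k + 1) ≤ 2 then a / 2 ^ (k + 1) else 0) ≤ 4 :=
  (sum_dyadic_le_max a N).trans
    (max_le (by norm_num) (sub_le_self _ (div_nonneg ha (by positivity))))

variable {ι : Type*} {S : Finset ι} {f : ι → ℝ × ℝ → ℝ}

lemma hasCompactSupport_sum (hc : ∀ i ∈ S, HasCompactSupport (f i)) :
    HasCompactSupport fun p => ∑ i ∈ S, f i p := by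
  rw [← Finset.sum_fn]
  exact Finset.sum_induction _ _ (fun _ _ => HasCompactSupport.add) HasCompactSupport.zero hc

lemma pd_sum (v : ℝ × ℝ) (hf : ∀ i ∈ S, Differentiable ℝ (f i)) :
    pd v (fun p => ∑ i ∈ S, f i p) = fun p => ∑ i ∈ S, pd v (f i) p := by
  funext p
  rw [pd, fderiv_fun_sum fun i hi => hf i hi p, sum_apply]
  rfl

lemma xrayHess_sum (hf : ∀ i ∈ S, ContDiff ℝ ∞ (f i)) (hc : ∀ i ∈ S, HasCompactSupport (f i))
    (s θ : ℝ) : xrayHess (fun p => ∑ i ∈ S, f i p) s θ = ∑ i ∈ S, xrayHess (f i) s θ := by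
  rw [xrayHess, pd_sum _ fun i hi => (hf i hi).differentiable (by simp),
    pd_sum _ fun i hi => (contDiff_pd (hf i hi) _).differentiable (by simp)]
  simp only [xrayHess, xray_eq]
  exact integral_finsetSum _ fun i hi => integrable_comp_line
    (contDiff_pd (contDiff_pd (hf i hi) _) _).continuous
    (hasCompactSupport_pd (hasCompactSupport_pd (hc i hi) _) _) _ (dirVec_ne_zero θ)

lemma exists_xrayHess_sum_dyadicCorrection_ge (C : ℝ) {Q : ℝ} (hQ : 0 ≤ Q) : ∃ D, 0 ≤ D ∧
    ∀ (N : ℕ) (ψ : ℕ → ℝ × ℝ → ℝ), (∀ k, IsDyadicPiece (k + 1) C (ψ k)) →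
      ∑ k ∈ Finset.range N, qOf (ψ k) ≤ Q → ∀ s θ,
        -D ≤ xrayHess (fun p => ∑ k ∈ Finset.range N, dyadicCorrection (k + 1) (ψ k) p) s θ := by
  obtain ⟨D, hD, hle⟩ := exists_xrayHess_dyadicCorrection_ge C Q
  have hc := xray_invSq_annularBump_nonneg
  set c := xray (invSq annularBump) 0 0
  refine ⟨2 * c * Q + D * 4, by positivity, fun N ψ hψ hq s θ => ?_⟩
  have hqk (k : ℕ) (hk : k ∈ Finset.range N) : qOf (ψ k) ≤ Q :=
    (Finset.single_le_sum (fun j _ => (hψ j).qOf_nonneg) hk).trans hq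
  rw [xrayHess_sum (fun k _ => contDiff_dyadicCorrection (hψ k).contDiff _)
    fun k _ => hasCompactSupport_dyadicCorrection (hψ k).tsupport_subset]
  refine le_trans ?_ (Finset.sum_le_sum fun k hk => hle (k + 1) (ψ k) (hψ k) (hqk k hk) s θ)
  rw [Finset.sum_sub_distrib, Finset.sum_neg_distrib, ← Finset.mul_sum, ← Finset.mul_sum,
    neg_add, ← sub_eq_add_neg]
  gcongr
  exact sum_dyadic_le_four (abs_nonneg s) N

end Summation

end

/-- For any dyadic weight `ω = Σ_{k≥1} ω_k` as in Theorem 1.6, there is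
`ω̃ ∈ C_c^∞(ℝ²)` with `ω̃ ≤ ω` such that `Eω̃ + σ|y|` is plurisubharmonic for all
`σ ≥ σ₀`, where `σ₀ ≥ 0` depends only on `C_reg, C_gr`. -/
theorem psh_construction (Creg Cgr : ℝ) (hCreg : 0 ≤ Creg) (hCgr : 0 ≤ Cgr) :
    ∃ σ₀ : ℝ, 0 ≤ σ₀ ∧ ∀ ω : ℕ → ℝ × ℝ → ℝ,
      (∀ k, 1 ≤ k → ContDiff ℝ (⊤ : ℕ∞) (ω k)) →
      (∀ k, 1 ≤ k → HasCompactSupport (ω k)) →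
      (∀ k, 1 ≤ k → ∀ p, ω k p ≤ 0) →
      (∃ N, ∀ k, N ≤ k → ω k = 0) →
      (∀ k, 1 ≤ k → tsupport (ω k) ⊆ annulus k) →
      (∀ k, 1 ≤ k → KNle (ω k) Creg) →
      (∑' k : ℕ, qOf (ω (k + 1))) ≤ Cgr →
      ∃ ωt : ℝ × ℝ → ℝ, ContDiff ℝ (⊤ : ℕ∞) ωt ∧ HasCompactSupport ωt ∧
        (∀ p, ωt p ≤ ∑' k : ℕ, ω (k + 1) p) ∧
        ∀ σ : ℝ, σ₀ ≤ σ → Psh (uExt ωt σ) := by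
  obtain ⟨D, hD, hbound⟩ := exists_xrayHess_sum_dyadicCorrection_ge Creg hCgr
  refine ⟨D / π, by positivity, fun ω hω _ hneg ⟨N, hN⟩ hs hKN hq => ?_⟩
  have hpiece (k : ℕ) : IsDyadicPiece (k + 1) Creg (ω (k + 1)) :=
    have hk := Nat.le_add_left 1 k
    ⟨hω _ hk, hs _ hk, hneg _ hk, hKN _ hk⟩
  have hzero (k : ℕ) (hk : k ∉ Finset.range N) : ω (k + 1) = 0 :=
    hN _ ((not_lt.1 (mt Finset.mem_range.2 hk)).trans k.le_succ)
  rw [tsum_eq_sum fun k hk => by rw [hzero k hk, qOf_zero]] at hq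
  have hsmooth : ContDiff ℝ (⊤ : ℕ∞) fun p =>
      ∑ k ∈ Finset.range N, dyadicCorrection (k + 1) (ω (k + 1)) p :=
    ContDiff.sum fun k _ => contDiff_dyadicCorrection (hpiece k).contDiff _
  have hcompact := hasCompactSupport_sum (S := Finset.range N) fun k _ =>
    hasCompactSupport_dyadicCorrection (hpiece k).tsupport_subset
  refine ⟨_, hsmooth, hcompact, fun p => ?_, fun σ hσ => ?_⟩
  · rw [tsum_eq_sum fun k hk => by rw [hzero k hk, Pi.zero_apply]]
    exact Finset.sum_le_sum fun k _ => (hpiece k).dyadicCorrection_le p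
  · refine psh_uExt_of_xrayHess_ge hsmooth hcompact fun s θ => ?_
    exact (neg_le_neg ((div_le_iff₀' pi_pos).1 hσ)).trans (hbound N _ hpiece hq s θ)

end
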